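/- Let u ∈ BC([0,T]×ℝⁿ) be a viscosity solution of ∂ₜu − F = 0 on (0,T)×ℝⁿ with u(0,·) ∈ BUC(ℝⁿ), where F satisfies the structural conditions (properness γ ≥ 0, condition (3.14), degenerate ellipticity) and F is bounded and uniformly continuous on sets where (u,p,X) remain bounded. Then u ∈ BUC([0,T]×ℝⁿ); moreover, for each η > 0 there exist constants C(η), K(η), independent of (t₀, x₀), such that |u(t,x₀) − u(t₀,x₀)| ≤ η + K(η)(t − t₀) for all 0 ≤ t₀ ≤ t ≤ T and all x₀ ∈ ℝⁿ. -/

import Mathlib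

open Set Filter Matrix

variable {n : ℕ}

/-- Time derivative `∂ₜφ` of a function on `ℝ × ℝⁿ`. -/
noncomputable def ptDeriv (φ : ℝ × EuclideanSpace ℝ (Fin n) → ℝ)
    (p : ℝ × EuclideanSpace ℝ (Fin n)) : ℝ :=
  fderiv ℝ φ p (1, 0)

/-- Spatial gradient `Dφ` of a function on `ℝ × ℝⁿ`. -/
noncomputable def pxGrad (φ : ℝ × EuclideanSpace ℝ (Fin n) → ℝ)
    (p : ℝ × EuclideanSpace ℝ (Fin n)) : EuclideanSpace ℝ (Fin n) :=
  (EuclideanSpace.equiv (Fin n) ℝ).symm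
    (fun i => fderiv ℝ φ p (0, EuclideanSpace.single i 1))

/-- Spatial Hessian `D²φ` of a function on `ℝ × ℝⁿ`, as a matrix. -/
noncomputable def pxHess (φ : ℝ × EuclideanSpace ℝ (Fin n) → ℝ)
    (p : ℝ × EuclideanSpace ℝ (Fin n)) : Matrix (Fin n) (Fin n) ℝ :=
  fun i j => fderiv ℝ (fun q => fderiv ℝ φ q (0, EuclideanSpace.single j 1)) p
    (0, EuclideanSpace.single i 1)


open Set Filter Matrix

section core
variable {H : Type*} [NormedAddCommGroup H] [InnerProductSpace ℝ H]

def Touch19 (T : H → ℝ) (C : ℝ) (k P : H) : Prop :=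
  ∀ e, T (k + e) ≤ T k + inner ℝ P e + C * ‖e‖ ^ 2

lemma touch19_lower {T : H → ℝ} (hT : ConvexOn ℝ univ T) {C : ℝ} {k P : H}
    (h : Touch19 T C k P) (e : H) : T k + inner ℝ P e ≤ T (k + e) := by
  have key : ∀ s : ℝ, 0 < s → T k + inner ℝ P e ≤ T (k + e) + s * (C * ‖e‖ ^ 2) := by
    intro s hs
    have h1 := hT.2 (mem_univ (k + e)) (mem_univ (k + (-s) • e))
      (show 0 ≤ s / (1 + s) by positivity) (show 0 ≤ 1 / (1 + s) by positivity)
      (by field_simp; ring)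
    have h2 := h ((-s) • e)
    have e1 : (s / (1 + s)) • (k + e) + (1 / (1 + s)) • (k + (-s) • e) = k := by
      have : (s / (1 + s)) + (1 / (1 + s)) = 1 := by field_simp; ring
      rw [smul_add, smul_add, smul_smul]
      have h3 : (1 / (1 + s)) * (-s) = -(s / (1 + s)) := by ring
      rw [h3, neg_smul]
      calc _ = ((s / (1 + s)) + (1 / (1 + s))) • k := by rw [add_smul]; abel
        _ = k := by rw [this, one_smul]
    rw [e1] at h1
    simp only [smul_eq_mul] at h1
    rw [inner_smul_right, norm_smul, mul_pow, Real.norm_eq_abs, sq_abs] at h2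
    have h4 : (1 + s) * T k ≤ s * T (k + e) + T (k + (-s) • e) := by
      have := mul_le_mul_of_nonneg_left h1 (by positivity : 0 ≤ 1 + s)
      calc _ ≤ _ := this
        _ = _ := by field_simp
    have h5 : s * (T k + inner ℝ P e) ≤ s * (T (k + e) + s * (C * ‖e‖ ^ 2)) := by nlinarith
    exact le_of_mul_le_mul_left h5 hs
  have lim : Tendsto (fun s : ℝ => T (k + e) + s * (C * ‖e‖ ^ 2)) (nhdsWithin 0 (Ioi 0))
      (nhds (T (k + e))) := by
    have : Tendsto (fun s : ℝ => T (k + e) + s * (C * ‖e‖ ^ 2)) (nhds 0)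
      (nhds (T (k + e) + 0 * (C * ‖e‖ ^ 2))) := by
      apply Continuous.tendsto; fun_prop
    rw [zero_mul, add_zero] at this
    exact this.mono_left nhdsWithin_le_nhds
  exact ge_of_tendsto lim (eventually_mem_nhdsWithin.mono fun s hs => key s hs)

lemma touch19_lip {T : H → ℝ} (hT : ConvexOn ℝ univ T) {C : ℝ} (hC : 0 < C) {k P k' P' : H}
    (h : Touch19 T C k P) (h' : Touch19 T C k' P') : ‖P - P'‖ ≤ 4 * C * ‖k - k'‖ := by
  set q := P - P' with hq
  set s : ℝ := 1 / (4 * C) with hs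
  have h1 := touch19_lower hT h (s • q)
  have h2 := h' (k + s • q - k')
  have h3 := touch19_lower hT h' (k - k')
  have e1 : k' + (k + s • q - k') = k + s • q := by abel
  have e2 : k' + (k - k') = k := by abel
  have e3 : k + s • q - k' = (k - k') + s • q := by abel
  rw [e1, e3, inner_add_right] at h2
  rw [e2] at h3
  have h4 : ‖(k - k') + s • q‖ ≤ ‖k - k'‖ + s * ‖q‖ := by
    refine (norm_add_le _ _).trans ?_
    rw [norm_smul, Real.norm_eq_abs, abs_of_pos (by positivity)]
  have h5 : ‖(k - k') + s • q‖ ^ 2 ≤ (‖k - k'‖ + s * ‖q‖) ^ 2 := by gcongr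
  have h6 : inner ℝ P (s • q) - inner ℝ P' (s • q) = s * ‖q‖ ^ 2 := by
    rw [← inner_sub_left, ← hq, inner_smul_right, real_inner_self_eq_norm_sq]
  have h7 : s * ‖q‖ ^ 2 ≤ C * (‖k - k'‖ + s * ‖q‖) ^ 2 := by
    have := mul_le_mul_of_nonneg_left h5 hC.le
    linarith
  have h8 : ‖q‖ ^ 2 ≤ (2 * C * ‖k - k'‖ + ‖q‖ / 2) ^ 2 := by
    have h9 : 4 * C * (s * ‖q‖ ^ 2) = ‖q‖ ^ 2 := by rw [hs]; field_simp
    have h10 : 4 * C * (C * (‖k - k'‖ + s * ‖q‖) ^ 2) = (2 * C * ‖k - k'‖ + ‖q‖ / 2) ^ 2 := by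
      rw [hs]; field_simp; ring
    have := mul_le_mul_of_nonneg_left h7 (by positivity : 0 ≤ 4 * C)
    linarith
  have h9 := abs_le_of_sq_le_sq h8 (by positivity)
  have h10 : ‖q‖ ≤ 2 * C * ‖k - k'‖ + ‖q‖ / 2 := (le_abs_self _).trans (by simpa using h9)
  linarith

variable [FiniteDimensional ℝ H]

/-- second order expansion at a differentiability/density point -/
lemma touch19_expand {T : H → ℝ} (hT : ConvexOn ℝ univ T) {C : ℝ} (hC : 0 < C)
    {K : Set H} {P : H → H} (hK : ∀ k ∈ K, Touch19 T C k (P k)) {x : H}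
    {M : H →L[ℝ] H} (hM : HasFDerivWithinAt P M K x)
    (hden : ∀ ε > (0:ℝ), ∃ r₀ > (0:ℝ), ∀ r, 0 < r → r < r₀ → ∀ v : H, ‖v‖ ≤ r →
      ∃ k ∈ K, ‖k - (x + v)‖ ≤ ε * r) :
    ∀ ε > (0:ℝ), ∃ r > (0:ℝ), ∀ h : H, ‖h‖ ≤ r →
      |T (x + h) - T x - inner ℝ (P x) h - (1/2) * inner ℝ (M h) h| ≤ ε * ‖h‖ ^ 2 := by
  intro ε hε
  -- choose N
  obtain ⟨N, hN⟩ := exists_nat_gt ((5 * C + 2 * ‖M‖ + 2) / ε + 1)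
  have hNpos : (0:ℝ) < N := lt_trans (by positivity) hN
  have hN1 : (1:ℝ) ≤ N := by
    have : 0 ≤ (5 * C + 2 * ‖M‖ + 2) / ε := by positivity
    linarith
  have hNε : 5 * C + 2 * ‖M‖ + 2 < ε * N := by
    have : (5 * C + 2 * ‖M‖ + 2) / ε < N := by linarith
    rw [div_lt_iff₀ hε] at this; linarith
  obtain ⟨r₀, hr₀, hd⟩ := hden (1 / N) (by positivity)
  have hlo := hM.isLittleO
  have hlo2 := hlo.def (show (0:ℝ) < 1 / (2 * N) by positivity)
  rw [eventually_nhdsWithin_iff, Metric.eventually_nhds_iff] at hlo2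
  obtain ⟨r₁, hr₁, hlo3⟩ := hlo2
  refine ⟨min (r₀ / 2) (r₁ / 4), by positivity, ?_⟩
  intro h hh
  by_cases h0 : h = 0
  · simp [h0]
  set r := ‖h‖ with hr
  have hrpos : 0 < r := norm_pos_iff.2 h0
  have hr0 : r < r₀ := by have := hh.trans (min_le_left _ _); linarith
  have hr1 : r ≤ r₁ / 4 := hh.trans (min_le_right _ _)
  have step : ∀ j : ℕ, j < N → |T (x + ((j + 1 : ℕ) / N : ℝ) • h) - T (x + ((j : ℝ) / N) • h)
      - (1 / N) * inner ℝ (P x) h - ((j : ℝ) / N ^ 2) * inner ℝ (M h) h|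
        ≤ (5 * C + ‖M‖ + 1) * r ^ 2 / N ^ 2 := by
    intro j hj
    have hjN : (j : ℝ) / N ≤ 1 := by
      rw [div_le_one hNpos]; exact_mod_cast hj.le
    have hjN0 : 0 ≤ (j : ℝ) / N := by positivity
    set v := ((j : ℝ) / N) • h with hv
    have hvn : ‖v‖ ≤ r := by
      rw [hv, norm_smul, Real.norm_eq_abs, abs_of_nonneg hjN0]
      exact mul_le_of_le_one_left hrpos.le hjN
    obtain ⟨k, hkK, hkd⟩ := hd r hrpos hr0 v hvn
    have e0 : (((j + 1 : ℕ) : ℝ) / N) • h = v + (1 / N : ℝ) • h := by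
      rw [hv, ← add_smul]; congr 1; push_cast; ring
    rw [e0]
    set w := (1 / N : ℝ) • h with hw
    set d := (x + v) - k with hdd
    have hdn : ‖d‖ ≤ r / N := by
      rw [hdd, norm_sub_rev]; calc _ ≤ _ := hkd
        _ = _ := by ring
    have hwn : ‖w‖ = r / N := by
      rw [hw, norm_smul, Real.norm_eq_abs, abs_of_pos (by positivity)]; ring
    have hdwn : ‖d + w‖ ≤ 2 * (r / N) := by
      refine (norm_add_le _ _).trans ?_; rw [hwn]; linarith
    have u1 := hK k hkK (d + w)
    have u2 := hK k hkK d
    have l1 := touch19_lower hT (hK k hkK) (d + w)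
    have l2 := touch19_lower hT (hK k hkK) d
    have e1 : k + (d + w) = x + (v + w) := by rw [hdd]; abel
    have e2 : k + d = x + v := by rw [hdd]; abel
    rw [e1, inner_add_right] at u1 l1
    rw [e2] at u2 l2
    have q1 : ‖d + w‖ ^ 2 ≤ 4 * (r / N) ^ 2 := by
      have : ‖d + w‖ ^ 2 ≤ (2 * (r / N)) ^ 2 := by gcongr
      linarith [this, mul_pow 2 (r / N) 2]
    have q2 : ‖d‖ ^ 2 ≤ (r / N) ^ 2 := by gcongr
    have q1' := mul_le_mul_of_nonneg_left q1 hC.le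
    have q2' := mul_le_mul_of_nonneg_left q2 hC.le
    -- P k
    have hkx : k - x = v - d := by rw [hdd]; abel
    have hkxn : ‖k - x‖ ≤ 2 * r := by
      rw [hkx]; refine (norm_sub_le _ _).trans ?_
      have : r / N ≤ r := div_le_self hrpos.le hN1
      linarith
    have hPk : ‖P k - P x - M (k - x)‖ ≤ 1 / (2 * N) * ‖k - x‖ := by
      apply hlo3 _ hkK
      rw [dist_eq_norm]; linarith
    have hPk2 : ‖P k - P x - M v‖ ≤ (1 + ‖M‖) * (r / N) := by
      have e3 : P k - P x - M v = (P k - P x - M (k - x)) - M d := by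
        rw [hkx, map_sub]; abel
      rw [e3]
      refine (norm_sub_le _ _).trans ?_
      have a1 : ‖M d‖ ≤ ‖M‖ * (r / N) := (M.le_opNorm d).trans (by gcongr)
      have a2 : 1 / (2 * N) * ‖k - x‖ ≤ r / N := by
        calc _ ≤ 1 / (2 * N) * (2 * r) := by gcongr
          _ = _ := by field_simp
      linarith
    have hin : |inner ℝ (P k - P x - M v) w| ≤ (1 + ‖M‖) * (r / N) ^ 2 := by
      refine (abs_real_inner_le_norm _ _).trans ?_
      rw [hwn, sq, ← mul_assoc]
      gcongr
    have hin2 : inner ℝ (P k - P x - M v) w = inner ℝ (P k) w - (1 / N) * inner ℝ (P x) h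
        - ((j : ℝ) / N ^ 2) * inner ℝ (M h) h := by
      rw [inner_sub_left, inner_sub_left, hv, map_smul, hw, inner_smul_left, inner_smul_right,
        inner_smul_right, inner_smul_right]
      simp
      ring
    rw [hin2] at hin
    have e5 : (5 * C + ‖M‖ + 1) * r ^ 2 / N ^ 2 = (5 * C + ‖M‖ + 1) * (r / N) ^ 2 := by ring
    rw [e5]
    generalize (r / N) ^ 2 = R2 at *
    rw [abs_le] at hin ⊢
    constructor <;> linarith [hin.1, hin.2]
  -- sum
  have hsum : T (x + h) - T x - inner ℝ (P x) h - (1/2) * inner ℝ (M h) h + (1 / (2 * N)) * inner ℝ (M h) h =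
    ∑ j ∈ Finset.range N, (T (x + ((j + 1 : ℕ) / N : ℝ) • h) - T (x + ((j : ℝ) / N) • h)
      - (1 / N) * inner ℝ (P x) h - ((j : ℝ) / N ^ 2) * inner ℝ (M h) h) := by
    rw [Finset.sum_sub_distrib, Finset.sum_sub_distrib,
      Finset.sum_range_sub (fun j : ℕ => T (x + ((j : ℝ) / N) • h)), ← Finset.sum_mul,
      ← Finset.sum_mul, ← Finset.sum_div, ← Finset.sum_div]
    have g : ∑ i ∈ Finset.range N, (i : ℝ) = N * (N - 1) / 2 := by
      have := Finset.sum_range_id_mul_two N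
      have h2 : ((∑ i ∈ Finset.range N, i : ℕ) : ℝ) * 2 = N * ((N - 1 : ℕ) : ℝ) := by exact_mod_cast this
      rw [Nat.cast_sub (by exact_mod_cast hN1)] at h2
      push_cast at h2
      linarith
    rw [g]
    simp only [Finset.sum_const, Finset.card_range, nsmul_eq_mul, Nat.cast_zero, zero_div, zero_smul,
      add_zero, div_self hNpos.ne', one_smul]
    field_simp
    ring
  have habs := Finset.abs_sum_le_sum_abs (fun j : ℕ => (T (x + ((j + 1 : ℕ) / N : ℝ) • h) - T (x + ((j : ℝ) / N) • h)
      - (1 / N) * inner ℝ (P x) h - ((j : ℝ) / N ^ 2) * inner ℝ (M h) h)) (Finset.range N)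
  rw [← hsum] at habs
  have hs2 := Finset.sum_le_sum (fun j (hj : j ∈ Finset.range N) => step j (Finset.mem_range.1 hj))
  simp only [Finset.sum_const, Finset.card_range, nsmul_eq_mul] at hs2
  have hb := habs.trans hs2
  have hMh : |inner ℝ (M h) h| ≤ ‖M‖ * r ^ 2 := by
    refine (abs_real_inner_le_norm _ _).trans ?_
    calc _ ≤ (‖M‖ * ‖h‖) * ‖h‖ := by gcongr; exact M.le_opNorm h
      _ = _ := by rw [hr]; ring
  have hMh2 : |(1 / (2 * N)) * inner ℝ (M h) h| ≤ ‖M‖ * r ^ 2 / N := by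
    rw [abs_mul, abs_of_pos (by positivity)]
    calc _ ≤ 1 / (2 * N) * (‖M‖ * r ^ 2) := by gcongr
      _ ≤ 1 / N * (‖M‖ * r ^ 2) := by gcongr; linarith
      _ = _ := by ring
  have e6 : (N : ℝ) * ((5 * C + ‖M‖ + 1) * r ^ 2 / N ^ 2) = (5 * C + ‖M‖ + 1) * r ^ 2 / N := by
    field_simp
  rw [e6] at hb
  have hfin : (5 * C + ‖M‖ + 1) * r ^ 2 / N + ‖M‖ * r ^ 2 / N ≤ ε * r ^ 2 := by
    rw [← add_div, div_le_iff₀ hNpos]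
    have := mul_le_mul_of_nonneg_right hNε.le (sq_nonneg r)
    linarith [this, sq_nonneg r]
  rw [abs_le] at hb hMh2 ⊢
  constructor <;> linarith [hb.1, hb.2, hMh2.1, hMh2.2]

open scoped Pointwise in
lemma density19 [MeasurableSpace H] [BorelSpace H] (μ : MeasureTheory.Measure H) [μ.IsAddHaarMeasure]
    {K : Set H} {x : H}
    (h : Tendsto (fun r => μ (K ∩ Metric.closedBall x r) / μ (Metric.closedBall x r))
      (nhdsWithin 0 (Ioi 0)) (nhds 1)) :
    ∀ ε > (0:ℝ), ∃ r₀ > (0:ℝ), ∀ r, 0 < r → r < r₀ → ∀ v : H, ‖v‖ ≤ r →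
      ∃ k ∈ K, ‖k - (x + v)‖ ≤ ε * r := by
  intro ε hε
  obtain ⟨t, ht, hfin, hcov⟩ := (isCompact_closedBall (0:H) 1).finite_cover_balls (half_pos hε)
  have h1 : ∀ c ∈ t, ∀ᶠ r in nhdsWithin (0:ℝ) (Ioi 0),
      (K ∩ ({x} + r • Metric.ball c (ε / 2))).Nonempty := fun c hc =>
    MeasureTheory.Measure.eventually_nonempty_inter_smul_of_density_one μ K x h _
      measurableSet_ball (Metric.measure_ball_pos μ c (half_pos hε)).ne'
  rw [← Filter.eventually_all_finite hfin] at h1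
  obtain ⟨r₀, hr₀, hr⟩ := mem_nhdsGT_iff_exists_Ioo_subset.1 h1
  refine ⟨r₀, hr₀, fun r hr1 hr2 v hv => ?_⟩
  have hv1 : (1 / r) • v ∈ Metric.closedBall (0:H) 1 := by
    rw [mem_closedBall_zero_iff, norm_smul, Real.norm_eq_abs, abs_of_pos (by positivity),
      one_div_mul_eq_div, div_le_one hr1]
    exact hv
  obtain ⟨c, hc, hvc⟩ := mem_iUnion₂.1 (hcov hv1)
  obtain ⟨k, hkK, hk⟩ := hr ⟨hr1, hr2⟩ c hc
  obtain ⟨a, ha, b, hb, hab⟩ := Set.mem_add.1 hk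
  obtain ⟨y, hy, hyb⟩ := Set.mem_smul_set.1 hb
  refine ⟨k, hkK, ?_⟩
  rw [mem_singleton_iff] at ha
  have : k - (x + v) = r • (y - (1 / r) • v) := by
    rw [← hab, ha, ← hyb, smul_sub, smul_smul, mul_one_div_cancel hr1.ne', one_smul]; abel
  rw [this, norm_smul, Real.norm_eq_abs, abs_of_pos hr1, mul_comm]
  gcongr
  rw [← dist_eq_norm]
  rw [Metric.mem_ball] at hy hvc
  have := dist_triangle_right y ((1 / r) • v) c
  linarith


lemma jensen19 {T : H → ℝ} (hT : ConvexOn ℝ univ T) {q : H → ℝ} {L : H → H} {C : ℝ} (hC : 0 < C)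
    (hq : ∀ x e, q (x + e) = q x + inner ℝ (L x) e + q e)
    (hqs : ∀ (s : ℝ) x, q (s • x) = s ^ 2 * q x)
    (hL : ∀ x y, ‖L x - L y‖ ≤ C * ‖x - y‖) (hqC : ∀ e, q e ≤ C * ‖e‖ ^ 2)
    (hqc : Continuous q) (xb : H) (hmax : ∀ x, T x - q x ≤ T xb - q xb) (ρ : ℝ) (hρ : 0 < ρ) :
    ∃ (k P : H) (M : H →L[ℝ] H), ‖k - xb‖ < ρ ∧ ‖P - L xb‖ < ρ ∧
      (∀ ε > (0:ℝ), ∃ r > (0:ℝ), ∀ h : H, ‖h‖ ≤ r →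
        |T (k + h) - T k - inner ℝ P h - (1/2) * inner ℝ (M h) h| ≤ ε * ‖h‖ ^ 2) ∧
      (∀ h, 0 ≤ (inner ℝ (M h) h : ℝ) ∧ (1/2) * (inner ℝ (M h) h : ℝ) ≤ q h + ρ * ‖h‖ ^ 2) := by
  borelize H
  have hTc : Continuous T := by
    have := hT.continuousOn isOpen_univ
    rwa [← continuousOn_univ]
  have hLc : Continuous L := by
    have : LipschitzWith ⟨C, hC.le⟩ L := LipschitzWith.of_dist_le_mul (fun x y => by
      rw [dist_eq_norm, dist_eq_norm]; exact hL x y)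
    exact this.continuous
  set d : ℝ := ρ / (2 + C + 3 * ρ) with hd
  have hdpos : 0 < d := by positivity
  have hdeq : d * (2 + C + 3 * ρ) = ρ := by rw [hd]; field_simp
  have hdρ : d < ρ := by nlinarith
  set δ : ℝ := ρ * d with hδ
  have hδpos : 0 < δ := by positivity
  set G : H → H → H := fun k p => L k + (2 * ρ) • (k - xb) + p with hG
  let KK : Set (H × H) := {kp | kp.1 ∈ Metric.closedBall xb d ∧ kp.2 ∈ Metric.closedBall 0 δ ∧
    ∀ e, T (kp.1 + e) ≤ T kp.1 + inner ℝ (G kp.1 kp.2) e + q e + ρ * ‖e‖ ^ 2}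
  have hKKc : IsCompact KK := by
    have h1 : IsCompact (Metric.closedBall xb d ×ˢ Metric.closedBall (0:H) δ) :=
      (isCompact_closedBall _ _).prod (isCompact_closedBall _ _)
    refine h1.of_isClosed_subset ?_ (fun kp h => ⟨h.1, h.2.1⟩)
    have : KK = (Prod.fst ⁻¹' Metric.closedBall xb d) ∩ (Prod.snd ⁻¹' Metric.closedBall 0 δ) ∩
      ⋂ e, {kp : H × H | T (kp.1 + e) ≤ T kp.1 + inner ℝ (G kp.1 kp.2) e + q e + ρ * ‖e‖ ^ 2} := by
      ext kp; simp [KK, and_assoc]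
    rw [this]
    refine ((Metric.isClosed_closedBall.preimage continuous_fst).inter
      (Metric.isClosed_closedBall.preimage continuous_snd)).inter (isClosed_iInter fun e => ?_)
    apply isClosed_le
    · fun_prop
    · simp only [hG]; fun_prop
  let K : Set H := Prod.fst '' KK
  have hKm : MeasurableSet K := (hKKc.image continuous_fst).measurableSet
  have hexp : ∀ k ∈ K, ∃ p, (k, p) ∈ KK := by
    rintro _ ⟨⟨k, p⟩, h, rfl⟩; exact ⟨p, h⟩
  choose! pf hpf using hexp
  let P : H → H := fun k => G k (pf k)
  set C' := C + ρ with hC'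
  have hC'pos : 0 < C' := by positivity
  have htouch : ∀ k p, (k, p) ∈ KK → Touch19 T C' k (G k p) := by
    intro k p h e
    have := h.2.2 e
    have := hqC e
    simp only at *
    rw [hC', add_mul]
    linarith
  have hKt : ∀ k ∈ K, Touch19 T C' k (P k) := fun k hk => htouch k _ (hpf k hk)
  have hPlip : LipschitzOnWith ⟨4 * C', by positivity⟩ P K :=
    LipschitzOnWith.of_dist_le_mul (fun x hx y hy => by
      rw [dist_eq_norm, dist_eq_norm]; exact touch19_lip hT hC'pos (hKt x hx) (hKt y hy))
  have hplip : LipschitzOnWith ⟨4 * C' + C + 2 * ρ, by positivity⟩ pf K :=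
    LipschitzOnWith.of_dist_le_mul (fun x hx y hy => by
      rw [dist_eq_norm, dist_eq_norm]
      have h1 := touch19_lip hT hC'pos (hKt x hx) (hKt y hy)
      have h2 := hL x y
      have e : pf x - pf y = (P x - P y) - (L x - L y) - (2 * ρ) • (x - y) := by
        simp only [P, hG, smul_sub]; abel
      rw [e]
      refine (norm_sub_le _ _).trans ?_
      have h3 := norm_sub_le (P x - P y) (L x - L y)
      rw [norm_smul, Real.norm_eq_abs, abs_of_pos (by positivity)]
      change _ ≤ (4 * C' + C + 2 * ρ) * ‖x - y‖
      linarith)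
  have himg : Metric.ball (0:H) δ ⊆ pf '' K := by
    intro p hp
    rw [mem_ball_zero_iff] at hp
    -- maximum of the perturbed function
    set g : H → ℝ := fun h => T h - q h - ρ * ‖h - xb‖ ^ 2 - inner ℝ p (h - xb) with hg
    have hgc : Continuous g := by simp only [hg]; fun_prop
    obtain ⟨k, hk, hkmax⟩ := (isCompact_closedBall xb d).exists_isMaxOn
      ⟨xb, Metric.mem_closedBall_self hdpos.le⟩ hgc.continuousOn
    have hgl : ∀ h, g h ≤ g k := by
      intro h
      by_cases hh : h ∈ Metric.closedBall xb d
      · exact hkmax hh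
      · have h1 : g xb ≤ g k := hkmax (Metric.mem_closedBall_self hdpos.le)
        refine le_trans ?_ h1
        simp only [Metric.mem_closedBall, not_le, dist_eq_norm] at hh
        simp only [hg, sub_self, norm_zero, inner_zero_right]
        have h2 := hmax h
        have h3 := (abs_le.1 (abs_real_inner_le_norm p (h - xb))).1
        have h4 : ‖p‖ * ‖h - xb‖ ≤ ρ * d * ‖h - xb‖ := by gcongr
        have h5 : ρ * d * ‖h - xb‖ ≤ ρ * ‖h - xb‖ * ‖h - xb‖ := by gcongr
        nlinarith
    have hkK : (k, p) ∈ KK := by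
      refine ⟨hk, mem_closedBall_zero_iff.2 hp.le, fun e => ?_⟩
      have h1 := hgl (k + e)
      simp only [hg] at h1
      have e1 : k + e - xb = (k - xb) + e := by abel
      rw [hq, e1, norm_add_sq_real, inner_add_right] at h1
      simp only [hG, inner_add_left, inner_smul_left]
      simp only [RCLike.conj_to_real]
      linarith
    have hkK' : k ∈ K := ⟨(k, p), hkK, rfl⟩
    refine ⟨k, hkK', ?_⟩
    have := touch19_lip hT hC'pos (htouch k _ (hpf k hkK')) (htouch k p hkK)
    rw [sub_self, norm_zero, mul_zero] at this
    have h2 := norm_le_zero_iff.1 this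
    simp only [hG] at h2
    have h3 : pf k - p = 0 := by rw [← h2]; abel
    exact sub_eq_zero.1 h3
  let μ : MeasureTheory.Measure H := MeasureTheory.Measure.hausdorffMeasure (Module.finrank ℝ H)
  have : μ.IsAddHaarMeasure := MeasureTheory.isAddHaarMeasure_hausdorffMeasure
  have hμK : μ K ≠ 0 := by
    intro h0
    have h1 := hplip.hausdorffMeasure_image_le (d := (Module.finrank ℝ H : ℝ)) (by positivity)
    have h2 : μ (pf '' K) = 0 := by
      refine le_antisymm (h1.trans ?_) zero_le
      change _ * μ K ≤ 0
      rw [h0, mul_zero]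
    have h3 : 0 < μ (Metric.ball (0:H) δ) := Metric.measure_ball_pos μ _ hδpos
    exact h3.ne' (MeasureTheory.measure_mono_null himg h2)
  have hdiff := hPlip.ae_differentiableWithinAt_of_mem (μ := μ)
  have hdens := Besicovitch.ae_tendsto_measure_inter_div_of_measurableSet μ hKm
  obtain ⟨k, hkK, hk1, hk2⟩ : ∃ k ∈ K, DifferentiableWithinAt ℝ P K k ∧
      Tendsto (fun r => μ (K ∩ Metric.closedBall k r) / μ (Metric.closedBall k r))
      (nhdsWithin 0 (Ioi 0)) (nhds 1) := by
    by_contra hcon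
    push Not at hcon
    apply hμK
    rw [MeasureTheory.measure_eq_zero_iff_ae_notMem]
    filter_upwards [hdiff, hdens] with x hx1 hx2 hxK
    rw [indicator_of_mem hxK] at hx2
    exact hcon x hxK (hx1 hxK) hx2
  have hkb := hpf k hkK
  have hexpd := touch19_expand hT hC'pos hKt hk1.hasFDerivWithinAt (density19 μ hk2)
  have hkd : ‖k - xb‖ ≤ d := by have := hkb.1; rwa [Metric.mem_closedBall, dist_eq_norm] at this
  have hpd : ‖pf k‖ ≤ ρ * d := by have := hkb.2.1; rwa [mem_closedBall_zero_iff] at this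
  set M := fderivWithin ℝ P K k with hM
  refine ⟨k, P k, M, by linarith, ?_, hexpd, fun h => ?_⟩
  · have e : P k - L xb = (L k - L xb) + (2 * ρ) • (k - xb) + pf k := by
      simp only [P, hG]; abel
    rw [e]
    have h1 := norm_add_le ((L k - L xb) + (2 * ρ) • (k - xb)) (pf k)
    have h2 := norm_add_le (L k - L xb) ((2 * ρ) • (k - xb))
    have h3 := hL k xb
    rw [norm_smul, Real.norm_eq_abs, abs_of_pos (by positivity)] at h2
    have h4 : C * ‖k - xb‖ ≤ C * d := by gcongr
    have h5 : (2 * ρ) * ‖k - xb‖ ≤ (2 * ρ) * d := by gcongr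
    nlinarith
  · -- bounds by scaling
    have key : ∀ ε > (0:ℝ), 0 ≤ (1/2) * (inner ℝ (M h) h : ℝ) + ε * ‖h‖ ^ 2 ∧
        (1/2) * (inner ℝ (M h) h : ℝ) ≤ q h + ρ * ‖h‖ ^ 2 + ε * ‖h‖ ^ 2 := by
      intro ε hε
      obtain ⟨r, hr, hr2⟩ := hexpd ε hε
      -- choose a dyadic scale
      have hlim : Tendsto (fun m : ℕ => ((1:ℝ)/2) ^ m * ‖h‖) atTop (nhds 0) := by
        have := (tendsto_pow_atTop_nhds_zero_of_lt_one (r := (1:ℝ)/2) (by norm_num) (by norm_num)).mul_const ‖h‖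
        simpa using this
      obtain ⟨m, hm⟩ := (hlim.eventually (gt_mem_nhds hr)).exists
      set s := ((1:ℝ)/2) ^ m with hs
      have hspos : 0 < s := by positivity
      have hns : ‖s • h‖ = s * ‖h‖ := by rw [norm_smul, Real.norm_eq_abs, abs_of_pos hspos]
      have h1 := hr2 (s • h) (by rw [hns]; exact hm.le)
      have h2 := touch19_lower hT (hKt k hkK) (s • h)
      have h3 := hkb.2.2 (s • h)
      change T (k + s • h) ≤ T k + inner ℝ (P k) (s • h) + q (s • h) + ρ * ‖s • h‖ ^ 2 at h3
      rw [hqs] at h3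
      rw [map_smul, inner_smul_left, inner_smul_right (M h), hns] at h1
      rw [hns] at h3
      simp only [RCLike.conj_to_real] at h1
      rw [abs_le] at h1
      have hs2 : 0 < s ^ 2 := by positivity
      constructor
      · apply le_of_mul_le_mul_left _ hs2
        nlinarith [h1.2]
      · apply le_of_mul_le_mul_left _ hs2
        nlinarith [h1.1]
    have lim : ∀ c : ℝ, Tendsto (fun ε : ℝ => c + ε * ‖h‖ ^ 2) (nhdsWithin 0 (Ioi 0)) (nhds c) := by
      intro c
      have : Tendsto (fun ε : ℝ => c + ε * ‖h‖ ^ 2) (nhds 0) (nhds (c + 0 * ‖h‖ ^ 2)) := by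
        apply Continuous.tendsto; fun_prop
      rw [zero_mul, add_zero] at this
      exact this.mono_left nhdsWithin_le_nhds
    constructor
    · have := ge_of_tendsto (lim _) (eventually_mem_nhdsWithin.mono fun s hs => (key s hs).1)
      linarith
    · exact ge_of_tendsto (lim _) (eventually_mem_nhdsWithin.mono fun s hs => (key s hs).2)

end core


section sums
variable {E : Type*} [NormedAddCommGroup E] [InnerProductSpace ℝ E] [FiniteDimensional ℝ E]

lemma supconv19 {D : Set E} (hD : IsClosed D) (hne : D.Nonempty) {u : E → ℝ}
    (hu : ContinuousOn u D) {C : ℝ} (hC : ∀ z ∈ D, u z ≤ C) {b : ℝ} (hb : 0 < b) :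
    ∃ m : E → E, (∀ z, m z ∈ D) ∧
      ∀ z, ∀ y ∈ D, u y - b / 2 * ‖y - z‖ ^ 2 ≤ u (m z) - b / 2 * ‖m z - z‖ ^ 2 := by
  have key : ∀ z, ∃ m ∈ D, ∀ y ∈ D, u y - b / 2 * ‖y - z‖ ^ 2 ≤ u m - b / 2 * ‖m - z‖ ^ 2 := by
    intro z
    obtain ⟨y0, hy0⟩ := hne
    set v0 := u y0 - b / 2 * ‖y0 - z‖ ^ 2 with hv0
    set R := ‖y0 - z‖ + 1 + 2 * (C - v0) / b with hR
    have hCv : 0 ≤ C - v0 := by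
      have := hC y0 hy0
      have : 0 ≤ b / 2 * ‖y0 - z‖ ^ 2 := by positivity
      linarith
    have hq : 0 ≤ 2 * (C - v0) / b := by positivity
    have hcomp : IsCompact (D ∩ Metric.closedBall z R) :=
      (isCompact_closedBall z R).inter_left hD
    have hy0mem : y0 ∈ D ∩ Metric.closedBall z R := ⟨hy0, by
      rw [Metric.mem_closedBall, dist_eq_norm]; linarith⟩
    obtain ⟨m, hm, hmax⟩ := hcomp.exists_isMaxOn ⟨y0, hy0mem⟩
      (f := fun y => u y - b / 2 * ‖y - z‖ ^ 2)
      ((hu.mono inter_subset_left).sub (by fun_prop))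
    refine ⟨m, hm.1, fun y hy => ?_⟩
    by_cases hyb : y ∈ Metric.closedBall z R
    · exact hmax ⟨hy, hyb⟩
    · refine le_trans ?_ (hmax hy0mem)
      change _ ≤ v0
      rw [Metric.mem_closedBall, dist_eq_norm, not_le] at hyb
      have h1 := hC y hy
      have h2 : 1 ≤ ‖y - z‖ := by linarith [norm_nonneg (y0 - z)]
      have h3 : 2 * (C - v0) / b ≤ ‖y - z‖ := by linarith [norm_nonneg (y0 - z)]
      rw [div_le_iff₀ hb] at h3
      have h4 : ‖y - z‖ ≤ ‖y - z‖ ^ 2 := by nlinarith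
      have h5 : b / 2 * ‖y - z‖ ≤ b / 2 * ‖y - z‖ ^ 2 := by gcongr
      linarith
  choose m hm1 hm2 using key
  exact ⟨m, hm1, hm2⟩

lemma zero19 {v : E} {C r : ℝ} (hr : 0 < r) (h : ∀ e, ‖e‖ ≤ r → inner ℝ v e ≤ C * ‖e‖ ^ 2) :
    v = 0 := by
  by_contra hv
  have hvp : 0 < ‖v‖ := norm_pos_iff.2 hv
  set s := min (r / ‖v‖) (1 / (2 * (|C| + 1))) with hs
  have hspos : 0 < s := by positivity
  have hns : ‖s • v‖ = s * ‖v‖ := by rw [norm_smul, Real.norm_eq_abs, abs_of_pos hspos]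
  have h1 := h (s • v) (by
    rw [hns]
    calc _ ≤ r / ‖v‖ * ‖v‖ := by gcongr; exact min_le_left _ _
      _ = r := by field_simp)
  rw [inner_smul_right, real_inner_self_eq_norm_sq, hns] at h1
  have h2 : s * (|C| + 1) ≤ 1 / 2 := by
    calc _ ≤ 1 / (2 * (|C| + 1)) * (|C| + 1) := by gcongr; exact min_le_right _ _
      _ = _ := by field_simp
  have h3 : C * (s * ‖v‖) ^ 2 ≤ (s * (|C| + 1)) * (s * ‖v‖ ^ 2) := by
    have : C ≤ |C| + 1 := by linarith [le_abs_self C]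
    calc _ ≤ (|C| + 1) * (s * ‖v‖) ^ 2 := by gcongr
      _ = _ := by ring
  have h4 : 0 < s * ‖v‖ ^ 2 := by positivity
  nlinarith

lemma supconv19_convex {D : Set E} {u : E → ℝ} {b : ℝ} {m : E → E} (hmD : ∀ z, m z ∈ D)
    (hm : ∀ z, ∀ y ∈ D, u y - b / 2 * ‖y - z‖ ^ 2 ≤ u (m z) - b / 2 * ‖m z - z‖ ^ 2) :
    ConvexOn ℝ univ (fun z => u (m z) - b / 2 * ‖m z - z‖ ^ 2 + b / 2 * ‖z‖ ^ 2) := by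
  refine ⟨convex_univ, fun x _ y _ α β hα hβ hαβ => ?_⟩
  set z := α • x + β • y with hz
  have h1 := hm x (m z) (hmD z)
  have h2 := hm y (m z) (hmD z)
  have e : ∀ x : E, ‖m z - x‖ ^ 2 = ‖m z‖ ^ 2 - 2 * inner ℝ (m z) x + ‖x‖ ^ 2 :=
    fun x => norm_sub_sq_real _ _
  have e2 : (inner ℝ (m z) z : ℝ) = α * inner ℝ (m z) x + β * inner ℝ (m z) y := by
    rw [hz, inner_add_right, inner_smul_right, inner_smul_right]
  simp only [smul_eq_mul]
  rw [e z, e2]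
  rw [e x] at h1
  rw [e y] at h2
  have h1' := mul_le_mul_of_nonneg_left h1 hα
  have h2' := mul_le_mul_of_nonneg_left h2 hβ
  have e3 : u (m z) = α * u (m z) + β * u (m z) := by rw [← add_mul, hαβ, one_mul]
  have e4 : b / 2 * ‖m z‖ ^ 2 = α * (b / 2 * ‖m z‖ ^ 2) + β * (b / 2 * ‖m z‖ ^ 2) := by
    rw [← add_mul, hαβ, one_mul]
  linarith

/-- transfer of a second-order expansion from the sup-convolution to the function -/
lemma supconv19_jet {D : Set E} {u : E → ℝ} {b : ℝ} {m : E → E} (hmD : ∀ z, m z ∈ D)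
    (hm : ∀ z, ∀ y ∈ D, u y - b / 2 * ‖y - z‖ ^ 2 ≤ u (m z) - b / 2 * ‖m z - z‖ ^ 2)
    {G : E → ℝ} (hG : ∀ z, G z = u (m z) - b / 2 * ‖m z - z‖ ^ 2 + b / 2 * ‖z‖ ^ 2)
    {z P : E} {M : E →L[ℝ] E}
    (hex : ∀ ε > (0:ℝ), ∃ r > (0:ℝ), ∀ h : E, ‖h‖ ≤ r →
      |G (z + h) - G z - inner ℝ P h - (1/2) * inner ℝ (M h) h| ≤ ε * ‖h‖ ^ 2) :
    P = b • m z ∧ ∀ ε > (0:ℝ), ∃ r > (0:ℝ), ∀ h : E, ‖h‖ ≤ r → m z + h ∈ D →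
      u (m z + h) ≤ u (m z) + inner ℝ (P - b • z) h
        + (1/2) * inner ℝ ((M - b • ContinuousLinearMap.id ℝ E) h) h + ε * ‖h‖ ^ 2 := by
  constructor
  · obtain ⟨r, hr, h1⟩ := hex 1 one_pos
    have : b • m z - P = 0 := by
      apply zero19 (C := ‖M‖ + 1) hr
      intro e he
      have h2 := h1 e he
      have h3 := hm (z + e) (m z) (hmD z)
      have e1 : ‖m z - (z + e)‖ ^ 2 = ‖m z - z‖ ^ 2 - 2 * inner ℝ (m z - z) e + ‖e‖ ^ 2 := by
        rw [← sub_sub]; exact norm_sub_sq_real _ _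
      have e2 : ‖z + e‖ ^ 2 = ‖z‖ ^ 2 + 2 * inner ℝ z e + ‖e‖ ^ 2 := norm_add_sq_real _ _
      rw [hG, hG, e2] at h2
      rw [e1] at h3
      have h4 : |inner ℝ (M e) e| ≤ ‖M‖ * ‖e‖ ^ 2 := by
        refine (abs_real_inner_le_norm _ _).trans ?_
        calc _ ≤ (‖M‖ * ‖e‖) * ‖e‖ := by gcongr; exact M.le_opNorm e
          _ = _ := by ring
      rw [inner_sub_left, inner_smul_left]
      rw [inner_sub_left] at h3
      simp only [RCLike.conj_to_real]
      rw [abs_le] at h2 h4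
      have h5 : 0 ≤ ‖M‖ * ‖e‖ ^ 2 := by positivity
      linarith [h2.2, h4.2]
    exact (sub_eq_zero.1 this).symm
  · intro ε hε
    obtain ⟨r, hr, h1⟩ := hex ε hε
    refine ⟨r, hr, fun h hh hD => ?_⟩
    have h2 := (abs_le.1 (h1 h hh)).2
    have h3 := hm (z + h) (m z + h) hD
    rw [add_sub_add_right_eq_sub] at h3
    rw [hG, hG, norm_add_sq_real] at h2
    simp only [inner_sub_left, inner_smul_left, _root_.sub_apply,
      _root_.smul_apply, ContinuousLinearMap.id_apply, RCLike.conj_to_real,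
      real_inner_self_eq_norm_sq]
    linarith

lemma fst19 (x y : E) : (WithLp.toLp 2 (x, y) : WithLp 2 (E × E)).fst = x := rfl
lemma snd19 (x y : E) : (WithLp.toLp 2 (x, y) : WithLp 2 (E × E)).snd = y := rfl

set_option maxHeartbeats 2000000 in
lemma sums19 {D : Set E} (hD : IsClosed D) {u₁ u₂ : E → ℝ}
    (hu₁ : ContinuousOn u₁ D) (hu₂ : ContinuousOn u₂ D) {C : ℝ} (hC₁ : ∀ z ∈ D, u₁ z ≤ C)
    (hC₂ : ∀ z ∈ D, u₂ z ≤ C) {a : ℝ} (ha : 0 < a) {zh wh : E} (hz : zh ∈ D) (hw : wh ∈ D)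
    (hmax : ∀ z ∈ D, ∀ w ∈ D, u₁ z + u₂ w - a / 2 * ‖z - w‖ ^ 2 ≤
      u₁ zh + u₂ wh - a / 2 * ‖zh - wh‖ ^ 2) (ρ : ℝ) (hρ : 0 < ρ) :
    ∃ (z w p q : E) (X Y : E →L[ℝ] E), z ∈ D ∧ w ∈ D ∧ ‖z - zh‖ < ρ ∧ ‖w - wh‖ < ρ ∧
      ‖p - a • (zh - wh)‖ < ρ ∧ ‖q + a • (zh - wh)‖ < ρ ∧
      (∀ ε > (0:ℝ), ∃ r > (0:ℝ), ∀ h : E, ‖h‖ ≤ r → z + h ∈ D →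
        u₁ (z + h) ≤ u₁ z + inner ℝ p h + (1/2) * inner ℝ (X h) h + ε * ‖h‖ ^ 2) ∧
      (∀ ε > (0:ℝ), ∃ r > (0:ℝ), ∀ h : E, ‖h‖ ≤ r → w + h ∈ D →
        u₂ (w + h) ≤ u₂ w + inner ℝ q h + (1/2) * inner ℝ (Y h) h + ε * ‖h‖ ^ 2) ∧
      (∀ h k : E, -(3 * a) * (‖h‖ ^ 2 + ‖k‖ ^ 2) ≤ (inner ℝ (X h) h + inner ℝ (Y k) k : ℝ) ∧
        (inner ℝ (X h) h + inner ℝ (Y k) k : ℝ) ≤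
          3 * a * ‖h - k‖ ^ 2 + ρ * (‖h‖ ^ 2 + ‖k‖ ^ 2)) := by
  set b := 3 * a with hb
  have hbpos : 0 < b := by positivity
  obtain ⟨m₁, hm₁D, hm₁⟩ := supconv19 hD ⟨zh, hz⟩ hu₁ hC₁ hbpos
  obtain ⟨m₂, hm₂D, hm₂⟩ := supconv19 hD ⟨zh, hz⟩ hu₂ hC₂ hbpos
  set G₁ : E → ℝ := fun z => u₁ (m₁ z) - b / 2 * ‖m₁ z - z‖ ^ 2 + b / 2 * ‖z‖ ^ 2 with hG₁
  set G₂ : E → ℝ := fun z => u₂ (m₂ z) - b / 2 * ‖m₂ z - z‖ ^ 2 + b / 2 * ‖z‖ ^ 2 with hG₂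
  have hc₁ : ConvexOn ℝ univ G₁ := supconv19_convex hm₁D hm₁
  have hc₂ : ConvexOn ℝ univ G₂ := supconv19_convex hm₂D hm₂
  set T : WithLp 2 (E × E) → ℝ := fun ξ => G₁ ξ.fst + G₂ ξ.snd with hT
  have hTc : ConvexOn ℝ univ T := by
    refine ⟨convex_univ, fun x _ y _ α β hα hβ hαβ => ?_⟩
    have h1 := hc₁.2 (mem_univ x.fst) (mem_univ y.fst) hα hβ hαβ
    have h2 := hc₂.2 (mem_univ x.snd) (mem_univ y.snd) hα hβ hαβ
    simp only [smul_eq_mul] at h1 h2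
    change G₁ (α • x.fst + β • y.fst) + G₂ (α • x.snd + β • y.snd) ≤ α * (G₁ x.fst + G₂ x.snd) + β * (G₁ y.fst + G₂ y.snd)
    linarith
  set q : WithLp 2 (E × E) → ℝ := fun ξ => b / 2 * (‖ξ.fst‖ ^ 2 + ‖ξ.snd‖ ^ 2 + ‖ξ.fst - ξ.snd‖ ^ 2) with hq
  set L : WithLp 2 (E × E) → WithLp 2 (E × E) := fun ξ => WithLp.toLp 2 (b • ((2:ℝ) • ξ.fst - ξ.snd), b • ((2:ℝ) • ξ.snd - ξ.fst)) with hL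
  have hnorm : ∀ ξ : WithLp 2 (E × E), ‖ξ‖ ^ 2 = ‖ξ.fst‖ ^ 2 + ‖ξ.snd‖ ^ 2 := WithLp.prod_norm_sq_eq_of_L2
  have hinner : ∀ ξ η : WithLp 2 (E × E), (inner ℝ ξ η : ℝ) = inner ℝ ξ.fst η.fst + inner ℝ ξ.snd η.snd :=
    fun ξ η => WithLp.prod_inner_apply ξ η
  set zb : E := (1/3 : ℝ) • ((2:ℝ) • zh + wh) with hzb
  set wb : E := (1/3 : ℝ) • (zh + (2:ℝ) • wh) with hwb
  have key := jensen19 hTc (q := q) (L := L) (C := 3 * b) (by positivity)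
    (by
      intro x e
      rw [hinner]
      simp only [hq, hL, WithLp.add_fst, WithLp.add_snd, fst19, snd19]
      have e1 : x.fst + e.fst - (x.snd + e.snd) = (x.fst - x.snd) + (e.fst - e.snd) := by abel
      rw [e1, norm_add_sq_real, norm_add_sq_real, norm_add_sq_real]
      simp only [inner_sub_left, inner_sub_right, inner_smul_left, RCLike.conj_to_real]
      ring)
    (by
      intro s x
      simp only [hq, WithLp.smul_fst, WithLp.smul_snd, ← smul_sub, norm_smul, mul_pow,
        Real.norm_eq_abs, sq_abs]
      ring)
    (by
      intro x y
      have e1 : L x - L y = b • WithLp.toLp 2 ((2:ℝ) • (x - y).fst - (x - y).snd, (2:ℝ) • (x - y).snd - (x - y).fst) := by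
        simp only [hL]
        rw [← WithLp.toLp_sub, ← WithLp.toLp_smul]
        congr 1
        ext
        · change b • ((2:ℝ) • x.fst - x.snd) - b • ((2:ℝ) • y.fst - y.snd) =
            b • ((2:ℝ) • (x.fst - y.fst) - (x.snd - y.snd))
          module
        · change b • ((2:ℝ) • x.snd - x.fst) - b • ((2:ℝ) • y.snd - y.fst) =
            b • ((2:ℝ) • (x.snd - y.snd) - (x.fst - y.fst))
          module
      rw [e1, norm_smul, Real.norm_eq_abs, abs_of_pos hbpos]
      generalize x - y = v
      have h1 : ‖(WithLp.toLp 2 ((2:ℝ) • v.fst - v.snd, (2:ℝ) • v.snd - v.fst) : WithLp 2 (E × E))‖ ≤ 3 * ‖v‖ := by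
        apply le_of_sq_le_sq _ (by positivity)
        rw [mul_pow, hnorm, hnorm]
        simp only [fst19, snd19]
        rw [norm_sub_sq_real, norm_sub_sq_real, norm_smul, norm_smul, inner_smul_left, inner_smul_left]
        simp only [RCLike.conj_to_real]
        rw [real_inner_comm v.fst v.snd]
        have h2 : 0 ≤ ‖v.fst + v.snd‖ ^ 2 := by positivity
        rw [norm_add_sq_real] at h2
        norm_num
        linarith
      calc _ ≤ b * (3 * ‖v‖) := by gcongr
        _ = _ := by ring)
    (by
      intro e
      rw [hnorm]
      simp only [hq]
      have h2 : 0 ≤ ‖e.fst + e.snd‖ ^ 2 := by positivity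
      have h3 := parallelogram_law_with_norm ℝ e.fst e.snd
      have h4 : ‖e.fst - e.snd‖ ^ 2 ≤ 2 * (‖e.fst‖ ^ 2 + ‖e.snd‖ ^ 2) := by linarith
      have h5 : 0 ≤ ‖e.fst‖ ^ 2 + ‖e.snd‖ ^ 2 := by positivity
      have : b / 2 * (‖e.fst‖ ^ 2 + ‖e.snd‖ ^ 2 + ‖e.fst - e.snd‖ ^ 2) ≤
        b / 2 * (‖e.fst‖ ^ 2 + ‖e.snd‖ ^ 2 + 2 * (‖e.fst‖ ^ 2 + ‖e.snd‖ ^ 2)) := by gcongr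
      nlinarith)
    (by
      simp only [hq]
      have c1 : Continuous (fun ξ : WithLp 2 (E × E) => ξ.fst) := WithLp.prod_continuous_ofLp 2 E E |>.fst
      have c2 : Continuous (fun ξ : WithLp 2 (E × E) => ξ.snd) := WithLp.prod_continuous_ofLp 2 E E |>.snd
      fun_prop)
    (WithLp.toLp 2 (zb, wb))
    (by
      intro ξ
      have up : T ξ - q ξ ≤ u₁ zh + u₂ wh - a / 2 * ‖zh - wh‖ ^ 2 := by
        simp only [hT, hq, hG₁, hG₂]
        set z := ξ.fst
        set w := ξ.snd
        have h1 := hmax (m₁ z) (hm₁D z) (m₂ w) (hm₂D w)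
        have e1 : m₁ z - m₂ w = (m₁ z - z) + (z - w) - (m₂ w - w) := by abel
        rw [e1] at h1
        set A := m₁ z - z
        set B := z - w
        set C := m₂ w - w
        have h2 : ‖A + B - C‖ ≤ ‖A‖ + ‖B‖ + ‖C‖ :=
          (norm_sub_le _ _).trans (by gcongr; exact norm_add_le _ _)
        have h3 : ‖A + B - C‖ ^ 2 ≤ (‖A‖ + ‖B‖ + ‖C‖) ^ 2 := by gcongr
        have h4 : ‖A + B - C‖ ^ 2 ≤ 3 * (‖A‖ ^ 2 + ‖B‖ ^ 2 + ‖C‖ ^ 2) := by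
          nlinarith [sq_nonneg (‖A‖ - ‖B‖), sq_nonneg (‖A‖ - ‖C‖), sq_nonneg (‖B‖ - ‖C‖)]
        have h5 : a / 2 * ‖A + B - C‖ ^ 2 ≤ a / 2 * (3 * (‖A‖ ^ 2 + ‖B‖ ^ 2 + ‖C‖ ^ 2)) := by gcongr
        rw [hb]
        linarith
      refine up.trans ?_
      simp only [hT, hq, hG₁, hG₂, fst19, snd19]
      have h1 := hm₁ zb zh hz
      have h2 := hm₂ wb wh hw
      have e1 : zh - zb = (1/3 : ℝ) • (zh - wh) := by rw [hzb]; module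
      have e2 : wh - wb = (-1/3 : ℝ) • (zh - wh) := by rw [hwb]; module
      have e3 : zb - wb = (1/3 : ℝ) • (zh - wh) := by rw [hzb, hwb]; module
      rw [e1, norm_smul, mul_pow] at h1
      rw [e2, norm_smul, mul_pow] at h2
      have e4 : ‖(1/3 : ℝ)‖ ^ 2 = 1 / 9 := by norm_num
      have e5 : ‖(-1/3 : ℝ)‖ ^ 2 = 1 / 9 := by norm_num
      have e7 : ‖zb - wb‖ ^ 2 = 1 / 9 * ‖zh - wh‖ ^ 2 := by rw [e3, norm_smul, mul_pow, e4]
      rw [e4] at h1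
      rw [e7]
      rw [e5] at h2
      have e6 : a = b / 3 := by rw [hb]; ring
      rw [e6]
      linarith)
  -- apply
  set ρ' := min (ρ / 2) (min (b * ρ) (ρ / (1 + b))) / 2 with hρ'
  have hρ'pos : 0 < ρ' := by positivity
  obtain ⟨k, P, M, hk, hP, hex, hMb⟩ := key ρ' hρ'pos
  have r1 : ρ' < ρ / 2 := by
    have := min_le_left (ρ / 2) (min (b * ρ) (ρ / (1 + b)))
    have h0 : 0 < min (ρ / 2) (min (b * ρ) (ρ / (1 + b))) := by positivity
    linarith
  have r2 : ρ' < b * ρ := by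
    have := (min_le_right (ρ / 2) (min (b * ρ) (ρ / (1 + b)))).trans (min_le_left _ _)
    have h0 : 0 < min (ρ / 2) (min (b * ρ) (ρ / (1 + b))) := by positivity
    linarith
  have r3 : (1 + b) * ρ' < ρ := by
    have := (min_le_right (ρ / 2) (min (b * ρ) (ρ / (1 + b)))).trans (min_le_right _ _)
    have h0 : 0 < min (ρ / 2) (min (b * ρ) (ρ / (1 + b))) := by positivity
    have h1 : ρ' < ρ / (1 + b) := by linarith
    rwa [lt_div_iff₀ (by positivity), mul_comm] at h1
  have hfst : ∀ ξ : WithLp 2 (E × E), ‖ξ.fst‖ ≤ ‖ξ‖ := fun ξ => by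
    apply le_of_sq_le_sq _ (by positivity); rw [hnorm]; nlinarith [sq_nonneg ‖ξ.snd‖]
  have hsnd : ∀ ξ : WithLp 2 (E × E), ‖ξ.snd‖ ≤ ‖ξ‖ := fun ξ => by
    apply le_of_sq_le_sq _ (by positivity); rw [hnorm]; nlinarith [sq_nonneg ‖ξ.fst‖]
  have hQ : ∀ h k' : E, (inner ℝ (M (WithLp.toLp 2 (h, k'))) (WithLp.toLp 2 (h, k')) : ℝ) =
      inner ℝ (M (WithLp.toLp 2 (h, 0))) (WithLp.toLp 2 (h, 0)) +
      inner ℝ (M (WithLp.toLp 2 (0, k'))) (WithLp.toLp 2 (0, k')) := by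
    intro h k'
    set v : WithLp 2 (E × E) := WithLp.toLp 2 (h, k') with hv
    set v1 : WithLp 2 (E × E) := WithLp.toLp 2 (h, 0) with hv1
    set v2 : WithLp 2 (E × E) := WithLp.toLp 2 (0, k') with hv2
    have hvv : v = v1 + v2 := by
      rw [hv, hv1, hv2, ← WithLp.toLp_add]; simp
    set S := ‖v‖ + ‖v1‖ + ‖v2‖ + 1 with hS
    have hSp : 0 < S := by positivity
    have hTadd : ∀ s : ℝ, T (k + s • v) - T k = (T (k + s • v1) - T k) + (T (k + s • v2) - T k) := by
      intro s
      change (G₁ (k.fst + s • h) + G₂ (k.snd + s • k')) - (G₁ k.fst + G₂ k.snd) =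
        (G₁ (k.fst + s • h) + G₂ (k.snd + s • (0:E)) - (G₁ k.fst + G₂ k.snd)) +
        (G₁ (k.fst + s • (0:E)) + G₂ (k.snd + s • k') - (G₁ k.fst + G₂ k.snd))
      simp only [smul_zero, add_zero]
      ring
    have hall : ∀ ε > (0:ℝ), |(inner ℝ (M v) v : ℝ) - (inner ℝ (M v1) v1 + inner ℝ (M v2) v2)| ≤
        ε := by
      intro ε hε
      obtain ⟨r, hr, h1⟩ := hex (ε / (6 * S ^ 2)) (by positivity)
      set s := r / S with hs
      have hsp : 0 < s := by positivity
      have hsm : ∀ w : WithLp 2 (E × E), ‖w‖ ≤ S → |T (k + s • w) - T k - s * inner ℝ P w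
          - s ^ 2 * ((1/2) * inner ℝ (M w) w)| ≤ s ^ 2 * (ε / 6) := by
        intro w hw
        have hn : ‖s • w‖ = s * ‖w‖ := by rw [norm_smul, Real.norm_eq_abs, abs_of_pos hsp]
        have h2 := h1 (s • w) (by
          rw [hn]
          calc s * ‖w‖ ≤ s * S := by gcongr
            _ = r := by rw [hs]; field_simp)
        rw [hn, map_smul, inner_smul_right, inner_smul_right, inner_smul_left] at h2
        simp only [RCLike.conj_to_real] at h2
        have e1 : ε / (6 * S ^ 2) * (s * ‖w‖) ^ 2 ≤ s ^ 2 * (ε / 6) := by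
          calc _ ≤ ε / (6 * S ^ 2) * (s * S) ^ 2 := by gcongr
            _ = _ := by field_simp
        refine le_trans (le_of_eq ?_) (h2.trans e1)
        congr 1; ring
      have a0 := abs_le.1 (hsm v (by linarith [norm_nonneg v1, norm_nonneg v2]))
      have a1 := abs_le.1 (hsm v1 (by linarith [norm_nonneg v, norm_nonneg v2]))
      have a2 := abs_le.1 (hsm v2 (by linarith [norm_nonneg v, norm_nonneg v1]))
      have e := hTadd s
      have e' : (inner ℝ P v : ℝ) = inner ℝ P v1 + inner ℝ P v2 := by rw [hvv, inner_add_right]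
      have hs2 : 0 < s ^ 2 := by positivity
      rw [e'] at a0
      rw [abs_le]
      constructor
      · have : s ^ 2 * (-ε) ≤ s ^ 2 * ((inner ℝ (M v) v : ℝ) - (inner ℝ (M v1) v1 + inner ℝ (M v2) v2)) := by
          linarith [a0.1, a0.2, a1.1, a1.2, a2.1, a2.2]
        exact le_of_mul_le_mul_left this hs2
      · have : s ^ 2 * ((inner ℝ (M v) v : ℝ) - (inner ℝ (M v1) v1 + inner ℝ (M v2) v2)) ≤ s ^ 2 * ε := by
          linarith [a0.1, a0.2, a1.1, a1.2, a2.1, a2.2]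
        exact le_of_mul_le_mul_left this hs2
    have h0 := le_of_forall_gt_imp_ge_of_dense (a₁ := |(inner ℝ (M v) v : ℝ) - (inner ℝ (M v1) v1 + inner ℝ (M v2) v2)|) (a₂ := 0) (fun ε hε => hall ε hε)
    exact sub_eq_zero.1 (abs_eq_zero.1 (le_antisymm h0 (abs_nonneg _)))
  let M1 : E →L[ℝ] E := LinearMap.toContinuousLinearMap
    { toFun := fun h => (M (WithLp.toLp 2 (h, 0))).fst
      map_add' := fun x y => by
        have : (WithLp.toLp 2 (x + y, 0) : WithLp 2 (E × E)) =
            WithLp.toLp 2 (x, 0) + WithLp.toLp 2 (y, 0) := by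
          rw [← WithLp.toLp_add]; simp
        rw [this, map_add]; rfl
      map_smul' := fun c x => by
        have : (WithLp.toLp 2 (c • x, 0) : WithLp 2 (E × E)) =
            c • WithLp.toLp 2 (x, 0) := by
          rw [← WithLp.toLp_smul]; simp
        rw [this, map_smul]; rfl }
  let M2 : E →L[ℝ] E := LinearMap.toContinuousLinearMap
    { toFun := fun h => (M (WithLp.toLp 2 (0, h))).snd
      map_add' := fun x y => by
        have : (WithLp.toLp 2 (0, x + y) : WithLp 2 (E × E)) =
            WithLp.toLp 2 (0, x) + WithLp.toLp 2 (0, y) := by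
          rw [← WithLp.toLp_add]; simp
        rw [this, map_add]; rfl
      map_smul' := fun c x => by
        have : (WithLp.toLp 2 (0, c • x) : WithLp 2 (E × E)) =
            c • WithLp.toLp 2 (0, x) := by
          rw [← WithLp.toLp_smul]; simp
        rw [this, map_smul]; rfl }
  have hM1 : ∀ h, (inner ℝ (M (WithLp.toLp 2 (h, 0))) (WithLp.toLp 2 (h, 0)) : ℝ) =
      inner ℝ (M1 h) h := by
    intro h
    rw [hinner]
    change (inner ℝ (M1 h) h : ℝ) + inner ℝ _ (0:E) = _
    rw [inner_zero_right, add_zero]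
  have hM2 : ∀ h, (inner ℝ (M (WithLp.toLp 2 (0, h))) (WithLp.toLp 2 (0, h)) : ℝ) =
      inner ℝ (M2 h) h := by
    intro h
    rw [hinner]
    change (inner ℝ _ (0:E) : ℝ) + inner ℝ (M2 h) h = _
    rw [inner_zero_right, zero_add]
  have hn1 : ∀ h : E, ‖(WithLp.toLp 2 (h, 0) : WithLp 2 (E × E))‖ = ‖h‖ := by
    intro h
    have := hnorm (WithLp.toLp 2 (h, 0))
    change _ = ‖h‖ ^ 2 + ‖(0:E)‖ ^ 2 at this
    rw [norm_zero] at this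
    nlinarith [norm_nonneg h, norm_nonneg (WithLp.toLp 2 (h, 0) : WithLp 2 (E × E))]
  have hn2 : ∀ h : E, ‖(WithLp.toLp 2 (0, h) : WithLp 2 (E × E))‖ = ‖h‖ := by
    intro h
    have := hnorm (WithLp.toLp 2 (0, h))
    change _ = ‖(0:E)‖ ^ 2 + ‖h‖ ^ 2 at this
    rw [norm_zero] at this
    nlinarith [norm_nonneg h, norm_nonneg (WithLp.toLp 2 (0, h) : WithLp 2 (E × E))]
  obtain ⟨hP1, hj1⟩ := supconv19_jet hm₁D hm₁ (G := G₁) (fun _ => rfl) (z := k.fst) (P := P.fst)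
    (M := M1) (by
      intro ε hε
      obtain ⟨r, hr, h1⟩ := hex ε hε
      refine ⟨r, hr, fun h hh => ?_⟩
      have h2 := h1 (WithLp.toLp 2 (h, 0)) (by rwa [hn1])
      rw [hn1, hM1, hinner] at h2
      change |(G₁ (k.fst + h) + G₂ (k.snd + 0)) - (G₁ k.fst + G₂ k.snd) -
        (inner ℝ P.fst h + inner ℝ P.snd (0:E)) - _| ≤ _ at h2
      rw [inner_zero_right, add_zero, add_zero, add_sub_add_right_eq_sub] at h2
      exact h2)
  obtain ⟨hP2, hj2⟩ := supconv19_jet hm₂D hm₂ (G := G₂) (fun _ => rfl) (z := k.snd) (P := P.snd)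
    (M := M2) (by
      intro ε hε
      obtain ⟨r, hr, h1⟩ := hex ε hε
      refine ⟨r, hr, fun h hh => ?_⟩
      have h2 := h1 (WithLp.toLp 2 (0, h)) (by rwa [hn2])
      rw [hn2, hM2, hinner] at h2
      change |(G₁ (k.fst + 0) + G₂ (k.snd + h)) - (G₁ k.fst + G₂ k.snd) -
        (inner ℝ P.fst (0:E) + inner ℝ P.snd h) - _| ≤ _ at h2
      rw [inner_zero_right, zero_add, add_zero, add_sub_add_left_eq_sub] at h2
      exact h2)
  have hL1 : b • ((2:ℝ) • zb - wb) = b • zh := by rw [hzb, hwb]; module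
  have hL2 : b • ((2:ℝ) • wb - zb) = b • wh := by rw [hzb, hwb]; module
  have hPf : ‖P.fst - b • zh‖ < ρ' := by
    rw [← hL1]; exact lt_of_le_of_lt (hfst (P - L (WithLp.toLp 2 (zb, wb)))) hP
  have hPs : ‖P.snd - b • wh‖ < ρ' := by
    rw [← hL2]; exact lt_of_le_of_lt (hsnd (P - L (WithLp.toLp 2 (zb, wb)))) hP
  have hkf : ‖k.fst - zb‖ < ρ' := lt_of_le_of_lt (hfst (k - WithLp.toLp 2 (zb, wb))) hk
  have hks : ‖k.snd - wb‖ < ρ' := lt_of_le_of_lt (hsnd (k - WithLp.toLp 2 (zb, wb))) hk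
  have bclose : ∀ x y : E, ‖b • x - b • y‖ < ρ' → ‖x - y‖ < ρ := by
    intro x y h
    rw [← smul_sub, norm_smul, Real.norm_eq_abs, abs_of_pos hbpos] at h
    exact lt_of_mul_lt_mul_left (h.trans r2) hbpos.le
  have pclose : ∀ p x p0 x0 g : E, ‖p - p0‖ < ρ' → ‖x - x0‖ < ρ' → p0 - b • x0 = g →
      ‖p - b • x - g‖ < ρ := by
    intro p x p0 x0 g h1 h2 h3
    have : p - b • x - g = (p - p0) - b • (x - x0) := by rw [← h3]; module
    rw [this]
    refine lt_of_le_of_lt (norm_sub_le _ _) ?_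
    rw [norm_smul, Real.norm_eq_abs, abs_of_pos hbpos]
    nlinarith
  refine ⟨m₁ k.fst, m₂ k.snd, P.fst - b • k.fst, P.snd - b • k.snd,
    M1 - b • ContinuousLinearMap.id ℝ E, M2 - b • ContinuousLinearMap.id ℝ E,
    hm₁D _, hm₂D _, bclose _ _ (by rwa [← hP1]), bclose _ _ (by rwa [← hP2]), ?_, ?_, hj1, hj2, ?_⟩
  · exact pclose _ _ _ _ _ hPf hkf (by rw [hzb, hb]; module)
  · rw [← sub_neg_eq_add]
    exact pclose _ _ _ _ _ hPs hks (by rw [hwb, hb]; module)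
  · intro h k'
    have hm := hMb (WithLp.toLp 2 (h, k'))
    rw [hQ, hM1, hM2, hnorm] at hm
    change _ ∧ _ ≤ b / 2 * (‖h‖ ^ 2 + ‖k'‖ ^ 2 + ‖h - k'‖ ^ 2) + ρ' * (‖h‖ ^ 2 + ‖k'‖ ^ 2) at hm
    simp only [inner_sub_left, inner_smul_left, _root_.sub_apply,
      _root_.smul_apply, ContinuousLinearMap.id_apply, RCLike.conj_to_real,
      real_inner_self_eq_norm_sq]
    constructor
    · linarith [hm.1]
    · have : ρ' * (‖h‖ ^ 2 + ‖k'‖ ^ 2) ≤ ρ / 2 * (‖h‖ ^ 2 + ‖k'‖ ^ 2) := by gcongr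
      linarith [hm.2]
end sums

abbrev V19 (n : ℕ) := EuclideanSpace ℝ (Fin n)

def SubSol19 (T : ℝ) (F : ℝ → V19 n → ℝ → V19 n → Matrix (Fin n) (Fin n) ℝ → ℝ)
    (u : ℝ × V19 n → ℝ) : Prop :=
  ∀ ψ : ℝ × V19 n → ℝ, ContDiff ℝ 2 ψ → ∀ t₀ ∈ Set.Ioo 0 T, ∀ x₀,
    IsLocalMaxOn (fun q => u q - ψ q) (Set.Ioo 0 T ×ˢ Set.univ) (t₀, x₀) →
    ptDeriv ψ (t₀, x₀) - F t₀ x₀ (u (t₀, x₀)) (pxGrad ψ (t₀, x₀)) (pxHess ψ (t₀, x₀)) ≤ 0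

noncomputable def mat19 (X : V19 n →L[ℝ] V19 n) : Matrix (Fin n) (Fin n) ℝ :=
  fun i j => inner ℝ (X (EuclideanSpace.single i 1)) (EuclideanSpace.single j 1)

noncomputable def poly19 (th : ℝ) (xh : V19 n) (τ c : ℝ) (p : V19 n) (X : V19 n →L[ℝ] V19 n) :
    ℝ × V19 n → ℝ :=
  fun q => τ * (q.1 - th) + c * (q.1 - th) ^ 2 + inner ℝ p (q.2 - xh)
    + (1/2) * inner ℝ (X (q.2 - xh)) (q.2 - xh)

lemma poly19_contDiff (th : ℝ) (xh : V19 n) (τ c : ℝ) (p : V19 n) (X : V19 n →L[ℝ] V19 n) :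
    ContDiff ℝ 2 (poly19 th xh τ c p X) := by
  unfold poly19
  have h1 : ContDiff ℝ 2 (fun q : ℝ × V19 n => q.2 - xh) := by fun_prop
  have h2 : ContDiff ℝ 2 (fun q : ℝ × V19 n => X (q.2 - xh)) := X.contDiff.comp h1
  have h3 : ContDiff ℝ 2 (fun q : ℝ × V19 n => (inner ℝ (X (q.2 - xh)) (q.2 - xh) : ℝ)) :=
    h2.inner ℝ h1
  have h4 : ContDiff ℝ 2 (fun q : ℝ × V19 n => (inner ℝ p (q.2 - xh) : ℝ)) :=
    contDiff_const.inner ℝ h1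
  fun_prop

lemma poly19_fderiv (th : ℝ) (xh : V19 n) (τ c : ℝ) (p : V19 n) (X : V19 n →L[ℝ] V19 n)
    (hX : ∀ a b, (inner ℝ (X a) b : ℝ) = inner ℝ a (X b)) (q v : ℝ × V19 n) :
    fderiv ℝ (poly19 th xh τ c p X) q v = τ * v.1 + 2 * c * (q.1 - th) * v.1 + inner ℝ p v.2
      + inner ℝ (X (q.2 - xh)) v.2 := by
  have hd : DifferentiableAt ℝ (poly19 th xh τ c p X) q :=
    (poly19_contDiff th xh τ c p X).differentiable (by norm_num) q
  have h1 : HasDerivAt (fun s : ℝ => poly19 th xh τ c p X (q + s • v))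
      (fderiv ℝ (poly19 th xh τ c p X) q v) 0 := by
    have := hd.hasFDerivAt.hasLineDerivAt v
    exact this
  have h2 : HasDerivAt (fun s : ℝ => poly19 th xh τ c p X (q + s • v))
      (τ * v.1 + 2 * c * (q.1 - th) * v.1 + inner ℝ p v.2
      + inner ℝ (X (q.2 - xh)) v.2) 0 := by
    have e : (fun s : ℝ => poly19 th xh τ c p X (q + s • v)) = fun s : ℝ =>
        poly19 th xh τ c p X q + s * (τ * v.1 + 2 * c * (q.1 - th) * v.1 + inner ℝ p v.2
          + inner ℝ (X (q.2 - xh)) v.2) + s ^ 2 * (c * v.1 ^ 2 + (1/2) * inner ℝ (X v.2) v.2) := by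
      funext s
      simp only [poly19, Prod.fst_add, Prod.snd_add, Prod.smul_fst, Prod.smul_snd, smul_eq_mul]
      have e1 : q.2 + s • v.2 - xh = (q.2 - xh) + s • v.2 := by abel
      rw [e1]
      simp only [map_add, map_smul, inner_add_left, inner_add_right, inner_smul_left,
        inner_smul_right, RCLike.conj_to_real]
      have e2 : (inner ℝ (X v.2) (q.2 - xh) : ℝ) = inner ℝ (X (q.2 - xh)) v.2 := by
        rw [hX, real_inner_comm]
      rw [e2]
      ring
    rw [e]
    have h3 := ((hasDerivAt_id (0:ℝ)).mul_const (τ * v.1 + 2 * c * (q.1 - th) * v.1 + inner ℝ p v.2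
          + inner ℝ (X (q.2 - xh)) v.2)).const_add (poly19 th xh τ c p X q)
    have h4 := ((hasDerivAt_id (0:ℝ)).pow 2).mul_const (c * v.1 ^ 2 + (1/2) * inner ℝ (X v.2) v.2)
    exact (h3.add h4).congr_deriv (by simp)
  exact h1.unique h2

lemma subsol19_poly {T : ℝ} {F : ℝ → V19 n → ℝ → V19 n → Matrix (Fin n) (Fin n) ℝ → ℝ}
    {u : ℝ × V19 n → ℝ} (hS : SubSol19 T F u) {th : ℝ} {xh : V19 n} (hth : th ∈ Ioo 0 T)
    {τ c : ℝ} {p : V19 n} {X : V19 n →L[ℝ] V19 n}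
    (hX : ∀ a b, (inner ℝ (X a) b : ℝ) = inner ℝ a (X b)) {r : ℝ} (hr : 0 < r)
    (h : ∀ t x, t ∈ Ioo 0 T → |t - th| < r → ‖x - xh‖ < r → u (t, x) ≤ u (th, xh) + τ * (t - th) + c * (t - th) ^ 2
      + inner ℝ p (x - xh) + (1/2) * inner ℝ (X (x - xh)) (x - xh)) :
    τ ≤ F th xh (u (th, xh)) p (mat19 X) := by
  have h1 := hS (poly19 th xh τ c p X) (poly19_contDiff _ _ _ _ _ _) th hth xh (by
    have hn : Metric.ball ((th, xh) : ℝ × V19 n) r ∈ nhds (th, xh) := Metric.ball_mem_nhds _ hr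
    have : ∀ᶠ q in nhdsWithin ((th, xh) : ℝ × V19 n) (Ioo 0 T ×ˢ univ),
        q ∈ Metric.ball ((th, xh) : ℝ × V19 n) r ∧ q ∈ Ioo (0:ℝ) T ×ˢ (univ : Set (V19 n)) :=
      (eventually_nhdsWithin_of_eventually_nhds hn).and self_mem_nhdsWithin
    filter_upwards [this] with q hq
    obtain ⟨t, x⟩ := q
    rw [Metric.mem_ball, Prod.dist_eq, max_lt_iff, Real.dist_eq, dist_eq_norm] at hq
    have h2 := h t x hq.2.1 hq.1.1 hq.1.2
    have hz : poly19 th xh τ c p X (th, xh) = 0 := by simp [poly19]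
    change u (t, x) - poly19 th xh τ c p X (t, x) ≤ u (th, xh) - poly19 th xh τ c p X (th, xh)
    rw [hz]
    simp only [poly19]
    linarith)
  have e1 : ptDeriv (poly19 th xh τ c p X) (th, xh) = τ := by
    unfold ptDeriv; rw [poly19_fderiv _ _ _ _ _ _ hX]; simp
  have e2 : pxGrad (poly19 th xh τ c p X) (th, xh) = p := by
    unfold pxGrad
    ext i
    simp [poly19_fderiv _ _ _ _ _ _ hX, EuclideanSpace.inner_single_right]
  have e3 : pxHess (poly19 th xh τ c p X) (th, xh) = mat19 X := by
    unfold pxHess mat19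
    funext i j
    have e4 : (fun q => fderiv ℝ (poly19 th xh τ c p X) q (0, EuclideanSpace.single j 1)) =
        poly19 th xh 0 0 (X (EuclideanSpace.single j 1)) 0 + fun _ => (inner ℝ p (EuclideanSpace.single j 1) : ℝ) := by
      funext q
      rw [poly19_fderiv _ _ _ _ _ _ hX]
      have e6 : (inner ℝ (X (q.2 - xh)) (EuclideanSpace.single j 1) : ℝ) =
        inner ℝ (X (EuclideanSpace.single j 1)) (q.2 - xh) := by rw [hX, real_inner_comm]
      change _ + (inner ℝ (X (q.2 - xh)) (EuclideanSpace.single j 1) : ℝ) = _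
      rw [e6]
      simp [poly19]
      ring
    rw [e4]
    have e5 : fderiv ℝ (poly19 th xh 0 0 (X (EuclideanSpace.single j 1)) 0 + fun _ => (inner ℝ p (EuclideanSpace.single j 1) : ℝ)) (th, xh)
      = fderiv ℝ (poly19 th xh 0 0 (X (EuclideanSpace.single j 1)) 0) (th, xh) := fderiv_add_const _
    rw [e5, poly19_fderiv _ _ _ _ _ _ (by simp)]
    have e6 : (inner ℝ (X (EuclideanSpace.single i 1)) (EuclideanSpace.single j 1) : ℝ) =
        inner ℝ (X (EuclideanSpace.single j 1)) (EuclideanSpace.single i 1) := by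
      rw [hX, real_inner_comm]
    rw [e6]
    simp
  rw [e1, e2, e3] at h1
  linarith

abbrev W19 (n : ℕ) := WithLp 2 (ℝ × V19 n)

noncomputable def pt19 (s : ℝ) (x : V19 n) : W19 n := WithLp.toLp 2 (s, x)

lemma pt19_fst (s : ℝ) (x : V19 n) : (pt19 s x).fst = s := rfl
lemma pt19_snd (s : ℝ) (x : V19 n) : (pt19 s x).snd = x := rfl
lemma pt19_eta (z : W19 n) : pt19 z.fst z.snd = z := rfl

lemma W19_norm (z : W19 n) : ‖z‖ ^ 2 = z.fst ^ 2 + ‖z.snd‖ ^ 2 := by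
  rw [WithLp.prod_norm_sq_eq_of_L2]; simp

lemma W19_inner (z w : W19 n) : (inner ℝ z w : ℝ) = z.fst * w.fst + inner ℝ z.snd w.snd := by
  rw [WithLp.prod_inner_apply]
  change (inner ℝ z.fst w.fst : ℝ) + inner ℝ z.snd w.snd = _
  congr 1
  simp [mul_comm]

/-- symmetrised spatial block -/
lemma blk19 (X : W19 n →L[ℝ] W19 n) : ∃ S : V19 n →L[ℝ] V19 n,
    (∀ a b, (inner ℝ (S a) b : ℝ) = inner ℝ a (S b)) ∧
    ∀ a, (inner ℝ (S a) a : ℝ) = inner ℝ (X (pt19 0 a)) (pt19 0 a) := by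
  let A : V19 n →L[ℝ] V19 n := LinearMap.toContinuousLinearMap
    { toFun := fun h => (X (pt19 0 h)).snd
      map_add' := fun x y => by
        have : (pt19 0 (x + y) : W19 n) = pt19 0 x + pt19 0 y := by
          unfold pt19
          refine Eq.trans ?_ (WithLp.toLp_add 2 ((0:ℝ), x) ((0:ℝ), y))
          rw [Prod.mk_add_mk, add_zero]
        rw [this, map_add]; rfl
      map_smul' := fun c x => by
        have : (pt19 0 (c • x) : W19 n) = c • pt19 0 x := by
          unfold pt19
          refine Eq.trans ?_ (WithLp.toLp_smul 2 c ((0:ℝ), x))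
          rw [Prod.smul_mk, smul_zero]
        rw [this, map_smul]; rfl }
  refine ⟨(1/2 : ℝ) • (A + ContinuousLinearMap.adjoint A), ?_, ?_⟩
  · intro a b
    simp only [_root_.smul_apply, _root_.add_apply, inner_smul_left, inner_smul_right,
      inner_add_left, inner_add_right, ContinuousLinearMap.adjoint_inner_left,
      ContinuousLinearMap.adjoint_inner_right, RCLike.conj_to_real]
    ring
  · intro a
    rw [W19_inner, pt19_fst, pt19_snd]
    simp only [_root_.smul_apply, _root_.add_apply, inner_smul_left,
      inner_add_left, ContinuousLinearMap.adjoint_inner_left, RCLike.conj_to_real]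
    have : (X (pt19 0 a)).snd = A a := rfl
    rw [this, real_inner_comm a (A a)]
    ring

lemma inv19 {T T' t d : ℝ} (hT : T' < T) (ht : t < T') (hd : t + d ≤ T') :
    1 / (T - (t + d)) ≤ 1 / (T - t) + d / (T - t) ^ 2 + d ^ 2 * (1 / (T - T') ^ 3) := by
  have h1 : 0 < T - T' := by linarith
  have h2 : 0 < T - t := by linarith
  have h3 : 0 < T - (t + d) := by linarith
  have e : 1 / (T - (t + d)) - 1 / (T - t) - d / (T - t) ^ 2 = d ^ 2 * (1 / ((T - (t + d)) * (T - t) ^ 2)) := by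
    field_simp; ring
  have h4 : d ^ 2 * (1 / ((T - (t + d)) * (T - t) ^ 2)) ≤ d ^ 2 * (1 / (T - T') ^ 3) := by
    gcongr
    calc (T - T') ^ 3 = (T - T') * (T - T') ^ 2 := by ring
      _ ≤ _ := by gcongr <;> linarith
  linarith

lemma jet19 {T : ℝ} {F : ℝ → V19 n → ℝ → V19 n → Matrix (Fin n) (Fin n) ℝ → ℝ}
    {u : ℝ × V19 n → ℝ} (hS : SubSol19 T F u) {c σ η ε T' : ℝ} (hc : 0 < c) (hσ : 0 ≤ σ)
    (hT' : T' < T) {z p : W19 n} {X : W19 n →L[ℝ] W19 n}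
    (hz0 : 0 < c * z.fst) (hzT : c * z.fst < T')
    (hj : ∀ ε₁ > (0:ℝ), ∃ r > (0:ℝ), ∀ h : W19 n, ‖h‖ ≤ r →
      z + h ∈ {w : W19 n | c * w.fst ∈ Icc 0 T'} →
      (fun w : W19 n => u (c * w.fst, w.snd) - η * (c * w.fst) - σ * (1 / (T - c * w.fst)) - ε * ‖w.snd‖ ^ 2) (z + h) ≤
      (fun w : W19 n => u (c * w.fst, w.snd) - η * (c * w.fst) - σ * (1 / (T - c * w.fst)) - ε * ‖w.snd‖ ^ 2) z
        + inner ℝ p h + (1/2) * inner ℝ (X h) h + ε₁ * ‖h‖ ^ 2)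
    {S : V19 n →L[ℝ] V19 n} (hSs : ∀ a b, (inner ℝ (S a) b : ℝ) = inner ℝ a (S b))
    (hSX : ∀ a, (inner ℝ (S a) a : ℝ) = inner ℝ (X (pt19 0 a)) (pt19 0 a))
    {ε' : ℝ} (hε' : 0 < ε') :
    η + p.fst / c ≤ F (c * z.fst) z.snd (u (c * z.fst, z.snd)) (p.snd + (2 * ε) • z.snd)
      (mat19 (S + (2 * ε + ε') • ContinuousLinearMap.id ℝ (V19 n))) := by
  set t := c * z.fst with ht
  set x := z.snd with hx
  obtain ⟨r, hr, hj⟩ := hj (ε' / 4) (by positivity)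
  set N := ‖X‖ with hN
  have hN0 : 0 ≤ N := norm_nonneg _
  have hTt : 0 < T - t := by linarith
  -- cross-term bound
  have hcross : ∀ (s : ℝ) (y : V19 n), (inner ℝ (X (pt19 s y)) (pt19 s y) : ℝ) ≤
      inner ℝ (S y) y + (N + 2 * N ^ 2 / ε') * s ^ 2 + ε' / 2 * ‖y‖ ^ 2 := by
    intro s y
    have e1 : (pt19 s y : W19 n) = pt19 s 0 + pt19 0 y := by
      unfold pt19; rw [← WithLp.toLp_add]; simp
    have n1 : ‖(pt19 s 0 : W19 n)‖ = |s| := by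
      have := W19_norm (pt19 s 0 : W19 n)
      rw [pt19_fst, pt19_snd, norm_zero] at this
      rw [← Real.sqrt_sq (norm_nonneg _), this]
      simp [Real.sqrt_sq_eq_abs]
    have n2 : ‖(pt19 0 y : W19 n)‖ = ‖y‖ := by
      have := W19_norm (pt19 0 y : W19 n)
      rw [pt19_fst, pt19_snd] at this
      rw [← Real.sqrt_sq (norm_nonneg _), this]
      simp
    have b : ∀ v w : W19 n, (inner ℝ (X v) w : ℝ) ≤ N * ‖v‖ * ‖w‖ := fun v w =>
      (real_inner_le_norm _ _).trans (by gcongr; exact X.le_opNorm v)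
    rw [e1, map_add, inner_add_left, inner_add_right, inner_add_right, hSX]
    have b1 := b (pt19 s 0) (pt19 s 0)
    have b2 := b (pt19 s 0) (pt19 0 y)
    have b3 := b (pt19 0 y) (pt19 s 0)
    rw [n1] at b1
    rw [n1, n2] at b2 b3
    have b4 : 2 * (N * |s| * ‖y‖) ≤ 2 * N ^ 2 / ε' * s ^ 2 + ε' / 2 * ‖y‖ ^ 2 := by
      have h5 : 0 ≤ (2 * N * |s| - ε' * ‖y‖) ^ 2 / (2 * ε') := by positivity
      have h6 : (2 * N * |s| - ε' * ‖y‖) ^ 2 / (2 * ε') =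
        2 * N ^ 2 / ε' * |s| ^ 2 + ε' / 2 * ‖y‖ ^ 2 - 2 * (N * |s| * ‖y‖) := by
        field_simp; ring
      rw [h6, sq_abs] at h5
      linarith
    have b5 : N * |s| * |s| = N * s ^ 2 := by rw [mul_assoc, abs_mul_abs_self]; ring
    have e : (N + 2 * N ^ 2 / ε') * s ^ 2 = N * s ^ 2 + 2 * N ^ 2 / ε' * s ^ 2 := by ring
    rw [e]
    linarith
  set r' := min (min (r / 2) (c * (r / 2))) (min t (T' - t)) with hr'
  have hr'pos : 0 < r' := by
    have : 0 < T' - t := by linarith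
    positivity
  have hq := subsol19_poly hS (th := t) (xh := x) ⟨hz0, by linarith⟩
    (τ := η + p.fst / c + σ / (T - t) ^ 2)
    (c := σ * (1 / (T - T') ^ 3) + (1/2) * (N + 2 * N ^ 2 / ε') / c ^ 2 + (ε' / 4) / c ^ 2)
    (p := p.snd + (2 * ε) • x) (X := S + (2 * ε + ε') • ContinuousLinearMap.id ℝ (V19 n))
    (by
      intro a b
      simp only [_root_.add_apply, _root_.smul_apply, ContinuousLinearMap.id_apply,
        inner_add_left, inner_add_right, inner_smul_left, inner_smul_right, hSs,
        RCLike.conj_to_real]) hr'pos (by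
    intro t₁ x₁ _ h1 h2
    set d := t₁ - t with hd
    set y := x₁ - x with hy
    have ht1 : t₁ = t + d := by rw [hd]; ring
    have hx1 : x₁ = x + y := by rw [hy]; abel
    have q1 : |d| < c * (r / 2) := h1.trans_le ((min_le_left _ _).trans (min_le_right _ _))
    have q2 : ‖y‖ < r / 2 := h2.trans_le ((min_le_left _ _).trans (min_le_left _ _))
    have q3 : |d| < t := h1.trans_le ((min_le_right _ _).trans (min_le_left _ _))
    have q4 : |d| < T' - t := h1.trans_le ((min_le_right _ _).trans (min_le_right _ _))
    set s := d / c with hs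
    have hcs : c * s = d := by rw [hs]; field_simp
    have hfst : c * (z + pt19 s y).fst = t + d := by
      change c * (z.fst + s) = _
      rw [mul_add, hcs]
    have hsnd : (z + pt19 s y).snd = x + y := rfl
    have hsr : |s| < r / 2 := by
      rw [hs, abs_div, abs_of_pos hc, div_lt_iff₀ hc]; linarith
    have hnn := W19_norm (pt19 s y : W19 n)
    rw [pt19_fst, pt19_snd] at hnn
    have h3 := hj (pt19 s y) (by
        apply le_of_sq_le_sq _ hr.le
        rw [hnn, ← sq_abs s]
        have : |s| ^ 2 ≤ (r/2) ^ 2 := by gcongr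
        have : ‖y‖ ^ 2 ≤ (r/2) ^ 2 := by gcongr
        nlinarith) (by
        rw [mem_setOf_eq, hfst]
        rw [abs_lt] at q3 q4
        constructor <;> linarith)
    simp only [hfst, hsnd] at h3
    simp only [← ht, ← hx] at h3
    rw [hnn] at h3
    rw [W19_inner, pt19_fst, pt19_snd] at h3
    have h4 := hcross s y
    have h5 := inv19 hT' hzT (d := d) (by linarith [le_abs_self d])
    have h6 := mul_le_mul_of_nonneg_left h5 hσ
    have h7 : ‖x + y‖ ^ 2 = ‖x‖ ^ 2 + 2 * inner ℝ x y + ‖y‖ ^ 2 := norm_add_sq_real _ _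
    rw [h7] at h3
    rw [ht1, hx1]
    simp only [_root_.add_apply, _root_.smul_apply, ContinuousLinearMap.id_apply,
        inner_add_left, inner_smul_left, RCLike.conj_to_real, real_inner_self_eq_norm_sq]
    have e1 : (η + p.fst / c + σ / (T - t) ^ 2) * d = η * d + p.fst * s + σ * (d / (T - t) ^ 2) := by
      rw [hs]; ring
    have e2 : (σ * (1 / (T - T') ^ 3) + (1/2) * (N + 2 * N ^ 2 / ε') / c ^ 2 + (ε' / 4) / c ^ 2) * d ^ 2
      = σ * (d ^ 2 * (1 / (T - T') ^ 3)) + (1/2) * (N + 2 * N ^ 2 / ε') * s ^ 2 + (ε' / 4) * s ^ 2 := by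
      rw [hs]; ring
    rw [e1, e2]
    linarith)
  have : 0 ≤ σ / (T - t) ^ 2 := by positivity
  linarith

lemma mat19_add (X Y : V19 n →L[ℝ] V19 n) : mat19 (X + Y) = mat19 X + mat19 Y := by
  funext i j; simp [mat19, inner_add_left]

lemma mat19_smul (s : ℝ) (X : V19 n →L[ℝ] V19 n) : mat19 (s • X) = s • mat19 X := by
  funext i j; simp [mat19, inner_smul_left]

lemma mat19_id (i j : Fin n) : mat19 (ContinuousLinearMap.id ℝ (V19 n)) i j = if i = j then 1 else 0 := by
  simp [mat19, EuclideanSpace.inner_single_left, Pi.single_apply, eq_comm]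

lemma mat19_quad (X : V19 n →L[ℝ] V19 n) (ξ : Fin n → ℝ) :
    ξ ⬝ᵥ (mat19 X).mulVec ξ = inner ℝ (X (WithLp.toLp 2 ξ)) (WithLp.toLp 2 ξ) := by
  have h : ∀ ξ : Fin n → ℝ, (WithLp.toLp 2 ξ : V19 n) = ∑ i, ξ i • EuclideanSpace.single i (1:ℝ) := by
    intro ξ
    ext j
    simp [Finset.sum_apply, Pi.single_apply]
  rw [h]
  simp only [map_sum, map_smul, sum_inner, inner_sum, inner_smul_left, inner_smul_right,
    RCLike.conj_to_real, dotProduct, Matrix.mulVec, Finset.mul_sum]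
  rw [Finset.sum_comm]
  refine Finset.sum_congr rfl fun i _ => Finset.sum_congr rfl fun j _ => ?_
  simp only [mat19]
  ring

lemma mat19_entry {S : V19 n →L[ℝ] V19 n} (hS : ∀ a b, (inner ℝ (S a) b : ℝ) = inner ℝ a (S b))
    {K : ℝ} (hK : ∀ h, |(inner ℝ (S h) h : ℝ)| ≤ K * ‖h‖ ^ 2) (i j : Fin n) : |mat19 S i j| ≤ K := by
  unfold mat19
  set e : V19 n := EuclideanSpace.single i 1 with he
  set f : V19 n := EuclideanSpace.single j 1 with hf
  have h1 := abs_le.1 (hK (e + f))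
  have h2 := abs_le.1 (hK (e - f))
  have h3 := parallelogram_law_with_norm ℝ e f
  have ne : ‖e‖ = 1 := by simp [he]
  have nf : ‖f‖ = 1 := by simp [hf]
  rw [ne, nf] at h3
  have h4 : (inner ℝ (S f) e : ℝ) = inner ℝ (S e) f := by rw [hS, real_inner_comm]
  simp only [map_add, map_sub, inner_add_left, inner_add_right, inner_sub_left, inner_sub_right, h4]
    at h1 h2
  have h5 : K * ‖e + f‖ ^ 2 + K * ‖e - f‖ ^ 2 = 4 * K := by
    rw [← mul_add, h3]; ring
  rw [abs_le]
  constructor <;> linarith [h1.1, h1.2, h2.1, h2.2]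

lemma mat19_psd {S : V19 n →L[ℝ] V19 n} (hS : ∀ a b, (inner ℝ (S a) b : ℝ) = inner ℝ a (S b))
    (h : ∀ a, 0 ≤ (inner ℝ (S a) a : ℝ)) : (mat19 S).PosSemidef := by
  apply Matrix.PosSemidef.of_dotProduct_mulVec_nonneg
  · ext i j
    simp only [Matrix.conjTranspose_apply, mat19, star_trivial]
    rw [hS, real_inner_comm]
  · intro x
    rw [star_trivial, mat19_quad]
    exact h _

lemma shift19 {S : V19 n →L[ℝ] V19 n} {a ρ κ : ℝ} (ha : 0 < a) (hρ : 0 < ρ) (hκ : 0 ≤ κ)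
    (hS : ∀ a b, (inner ℝ (S a) b : ℝ) = inner ℝ a (S b))
    (hq : ∀ h, -(3 * a) * ‖h‖ ^ 2 ≤ (inner ℝ (S h) h : ℝ) ∧ (inner ℝ (S h) h : ℝ) ≤ (3 * a + ρ) * ‖h‖ ^ 2)
    (i j : Fin n) :
    |mat19 (S + κ • ContinuousLinearMap.id ℝ (V19 n)) i j| ≤ 3 * a + ρ + κ ∧
    |mat19 ((3 * a / (3 * a + ρ)) • (S + (-ρ) • ContinuousLinearMap.id ℝ (V19 n))) i j| ≤ 3 * a + 2 * ρ ∧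
    |mat19 (S + κ • ContinuousLinearMap.id ℝ (V19 n)) i j -
      mat19 ((3 * a / (3 * a + ρ)) • (S + (-ρ) • ContinuousLinearMap.id ℝ (V19 n))) i j| ≤ 2 * ρ + κ := by
  have hK : |mat19 S i j| ≤ 3 * a + ρ := mat19_entry hS (fun h => by
    have := hq h
    rw [abs_le]
    have h0 : 0 ≤ ρ * ‖h‖ ^ 2 := by positivity
    constructor <;> linarith [this.1, this.2]) i j
  set s := 3 * a / (3 * a + ρ) with hs
  have h3 : 0 < 3 * a + ρ := by positivity
  have hs0 : 0 ≤ s := by positivity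
  have hs1 : s ≤ 1 := by rw [hs, div_le_one h3]; linarith
  have hs2 : (1 - s) * (3 * a + ρ) = ρ := by rw [hs]; field_simp; ring
  simp only [mat19_add, mat19_smul, Matrix.add_apply, Matrix.smul_apply, smul_eq_mul]
  set I := mat19 (ContinuousLinearMap.id ℝ (V19 n)) i j with hI
  have hI1 : 0 ≤ I ∧ I ≤ 1 := by rw [hI, mat19_id]; split_ifs <;> norm_num
  set m := mat19 S i j
  have hm := abs_le.1 hK
  have i1 : 0 ≤ κ * I := mul_nonneg hκ hI1.1
  have i2 : κ * I ≤ κ := by nlinarith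
  have i3 : 0 ≤ ρ * I := mul_nonneg hρ.le hI1.1
  have i4 : ρ * I ≤ ρ := by nlinarith
  have i5 : |m - ρ * I| ≤ 3 * a + 2 * ρ := by rw [abs_le]; constructor <;> linarith [hm.1, hm.2]
  refine ⟨by rw [abs_le]; constructor <;> linarith [hm.1, hm.2], ?_, ?_⟩
  · rw [abs_mul, abs_of_nonneg hs0]
    have : m + -ρ * I = m - ρ * I := by ring
    rw [this]
    calc s * |m - ρ * I| ≤ 1 * (3 * a + 2 * ρ) := by gcongr
      _ = _ := one_mul _
  · have e : m + κ * I - s * (m + -ρ * I) = (1 - s) * m + (κ * I + s * (ρ * I)) := by ring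
    rw [e]
    have j1 : |(1 - s) * m| ≤ ρ := by
      rw [abs_mul, abs_of_nonneg (by linarith)]
      calc (1 - s) * |m| ≤ (1 - s) * (3 * a + ρ) := by gcongr
        _ = ρ := hs2
    have j2 : s * (ρ * I) ≤ ρ := by nlinarith
    have j3 : 0 ≤ s * (ρ * I) := mul_nonneg hs0 i3
    have := abs_le.1 j1
    rw [abs_le]; constructor <;> linarith [this.1, this.2]

lemma compare19 {T : ℝ} {F : ℝ → V19 n → ℝ → V19 n → Matrix (Fin n) (Fin n) ℝ → ℝ}
    (hFell : ∀ t x r p (X Y : Matrix (Fin n) (Fin n) ℝ), (Y - X).PosSemidef →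
      F t x r p X ≤ F t x r p Y)
    (hFmono : ∀ t x p X r s, s ≤ r → F t x r p X ≤ F t x s p X)
    (hFuc : ∀ R > (0:ℝ), ∀ δ > (0:ℝ), ∃ η > (0:ℝ), ∀ t t' x x' r r' p p'
      (X X' : Matrix (Fin n) (Fin n) ℝ),
      t ∈ Set.Icc 0 T → t' ∈ Set.Icc 0 T →
      |r| ≤ R → |r'| ≤ R → ‖p‖ ≤ R → ‖p'‖ ≤ R →
      (∀ i j, |X i j| ≤ R) → (∀ i j, |X' i j| ≤ R) →
      |t - t'| < η → ‖x - x'‖ < η → |r - r'| < η → ‖p - p'‖ < η →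
      (∀ i j, |X i j - X' i j| < η) →
      |F t x r p X - F t' x' r' p' X'| < δ)
    {R a δ : ℝ} (hR : 0 < R) (ha : 0 < a) (hδ : 0 < δ) {θ : ℝ → ℝ}
    (hθ : ∀ t ∈ Set.Icc 0 T, ∀ (x xt : V19 n) (r a : ℝ)
        (X Y : Matrix (Fin n) (Fin n) ℝ), |r| ≤ R → 0 < a →
        (∀ ξ η : Fin n → ℝ,
          -(3 * a) * ((∑ i, ξ i ^ 2) + ∑ i, η i ^ 2)
              ≤ ξ ⬝ᵥ X.mulVec ξ - η ⬝ᵥ Y.mulVec η ∧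
          ξ ⬝ᵥ X.mulVec ξ - η ⬝ᵥ Y.mulVec η ≤ 3 * a * ∑ i, (ξ i - η i) ^ 2) →
        F t x r (a • (x - xt)) X - F t xt r (a • (x - xt)) Y
          ≤ θ (a * ‖x - xt‖ ^ 2 + ‖x - xt‖)) :
    ∃ μ > (0:ℝ), ∀ (t t' th : ℝ) (x y xh yh : V19 n) (r₁ r₂ : ℝ) (p₁ p₂ : V19 n)
      (S₁ S₂ : V19 n →L[ℝ] V19 n) (κ ρ Θ : ℝ), t ∈ Icc 0 T → t' ∈ Icc 0 T → th ∈ Icc 0 T →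
      |r₁| ≤ R → |r₂| ≤ R → r₂ ≤ r₁ → ‖xh - yh‖ ≤ R → |t - th| < μ → |t' - th| < μ →
      ‖x - xh‖ < μ → ‖y - yh‖ < μ → ‖p₁ - a • (xh - yh)‖ < μ → ‖p₂ - a • (xh - yh)‖ < μ →
      0 ≤ κ → κ < μ → 0 < ρ → ρ < μ →
      (∀ a b, (inner ℝ (S₁ a) b : ℝ) = inner ℝ a (S₁ b)) →
      (∀ a b, (inner ℝ (S₂ a) b : ℝ) = inner ℝ a (S₂ b)) →
      (∀ h k : V19 n, -(3 * a) * (‖h‖ ^ 2 + ‖k‖ ^ 2) ≤ (inner ℝ (S₁ h) h + inner ℝ (S₂ k) k : ℝ) ∧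
        (inner ℝ (S₁ h) h + inner ℝ (S₂ k) k : ℝ) ≤
          3 * a * ‖h - k‖ ^ 2 + ρ * (‖h‖ ^ 2 + ‖k‖ ^ 2)) →
      0 ≤ Θ → (xh ≠ yh → θ (a * ‖xh - yh‖ ^ 2 + ‖xh - yh‖) ≤ Θ) →
      F t x r₁ p₁ (mat19 (S₁ + κ • ContinuousLinearMap.id ℝ (V19 n))) -
        F t' y r₂ p₂ (-(mat19 (S₂ + κ • ContinuousLinearMap.id ℝ (V19 n)))) ≤ 2 * δ + Θ := by
  obtain ⟨μ0, hμ0, huc⟩ := hFuc (R + a * R + 3 * a + 5) (by positivity) δ hδ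
  refine ⟨min 1 (μ0 / 3), by positivity, ?_⟩
  intro t t' th x y xh yh r₁ r₂ p₁ p₂ S₁ S₂ κ ρ Θ ht ht' hth hr₁ hr₂ hr hxy h1 h2 h3 h4 h5 h6
    hκ h7 hρ h8 hs₁ hs₂ hq hΘ hθΘ
  set μ := min 1 (μ0 / 3) with hμ
  have m1 : μ ≤ 1 := min_le_left _ _
  have m2 : μ ≤ μ0 / 3 := min_le_right _ _
  set s := 3 * a / (3 * a + ρ) with hs
  have h3a : 0 < 3 * a + ρ := by positivity
  have hs0 : 0 ≤ s := by positivity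
  have hs1 : s ≤ 1 := by rw [hs, div_le_one h3a]; linarith
  have hs3 : s * (3 * a + ρ) = 3 * a := by rw [hs]; field_simp
  set X' := s • (S₁ + (-ρ) • ContinuousLinearMap.id ℝ (V19 n)) with hX'
  set Y' := s • (S₂ + (-ρ) • ContinuousLinearMap.id ℝ (V19 n)) with hY'
  have sh₁ := shift19 ha hρ hκ hs₁ (fun h => by
    have := hq h 0
    simp only [norm_zero, map_zero, inner_zero_right, sub_zero] at this
    constructor <;> linarith [this.1, this.2])
  have sh₂ := shift19 ha hρ hκ hs₂ (fun h => by
    have := hq 0 h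
    simp only [norm_zero, map_zero, inner_zero_right, zero_sub, norm_neg] at this
    constructor <;> linarith [this.1, this.2])
  have symX : ∀ a b, (inner ℝ (X' a) b : ℝ) = inner ℝ a (X' b) := by
    intro a b
    simp only [hX', _root_.add_apply, _root_.smul_apply, ContinuousLinearMap.id_apply,
        inner_add_left, inner_add_right, inner_smul_left, inner_smul_right, hs₁,
        RCLike.conj_to_real]
  have symY : ∀ a b, (inner ℝ (Y' a) b : ℝ) = inner ℝ a (Y' b) := by
    intro a b
    simp only [hY', _root_.add_apply, _root_.smul_apply, ContinuousLinearMap.id_apply,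
        inner_add_left, inner_add_right, inner_smul_left, inner_smul_right, hs₂,
        RCLike.conj_to_real]
  have hq' : ∀ h k : V19 n, -(3 * a) * (‖h‖ ^ 2 + ‖k‖ ^ 2) ≤ (inner ℝ (X' h) h + inner ℝ (Y' k) k : ℝ) ∧
        (inner ℝ (X' h) h + inner ℝ (Y' k) k : ℝ) ≤ 3 * a * ‖h - k‖ ^ 2 := by
    intro h k
    have e : (inner ℝ (X' h) h + inner ℝ (Y' k) k : ℝ) = s * ((inner ℝ (S₁ h) h + inner ℝ (S₂ k) k : ℝ)
      - ρ * (‖h‖ ^ 2 + ‖k‖ ^ 2)) := by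
      simp only [hX', hY', _root_.add_apply, _root_.smul_apply, ContinuousLinearMap.id_apply,
        inner_add_left, inner_smul_left, real_inner_self_eq_norm_sq, RCLike.conj_to_real]
      ring
    rw [e]
    obtain ⟨l, r⟩ := hq h k
    constructor
    · calc -(3 * a) * (‖h‖ ^ 2 + ‖k‖ ^ 2) = s * (-(3 * a + ρ) * (‖h‖ ^ 2 + ‖k‖ ^ 2)) := by
            linear_combination (‖h‖ ^ 2 + ‖k‖ ^ 2) * hs3
        _ ≤ _ := by
            apply mul_le_mul_of_nonneg_left _ hs0
            linarith
    · calc _ ≤ s * (3 * a * ‖h - k‖ ^ 2) := by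
            apply mul_le_mul_of_nonneg_left _ hs0
            linarith
        _ ≤ 1 * (3 * a * ‖h - k‖ ^ 2) := by gcongr
        _ = _ := one_mul _
  set P := a • (xh - yh) with hP
  have hPn : ‖P‖ ≤ a * R := by
    rw [hP, norm_smul, Real.norm_eq_abs, abs_of_pos ha]; gcongr
  have pn : ∀ p : V19 n, ‖p - P‖ < μ → ‖p‖ ≤ a * R + 1 := by
    intro p hp
    have : ‖p‖ ≤ ‖p - P‖ + ‖P‖ := by simpa using norm_add_le (p - P) P
    linarith
  have haR : 0 ≤ a * R := by positivity
  have c1 := huc t th x xh r₁ r₁ p₁ P (mat19 (S₁ + κ • ContinuousLinearMap.id ℝ (V19 n))) (mat19 X')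
    ht hth (by linarith) (by linarith) (by linarith [pn p₁ h5]) (by linarith)
    (fun i j => by linarith [(sh₁ i j).1]) (fun i j => by linarith [(sh₁ i j).2.1])
    (by linarith) (by linarith) (by simpa using hμ0) (by linarith)
    (fun i j => by linarith [(sh₁ i j).2.2])
  have c2 := huc t' th y yh r₂ r₂ p₂ P (-mat19 (S₂ + κ • ContinuousLinearMap.id ℝ (V19 n))) (-mat19 Y')
    ht' hth (by linarith) (by linarith) (by linarith [pn p₂ h6]) (by linarith)
    (fun i j => by rw [Matrix.neg_apply, abs_neg]; linarith [(sh₂ i j).1])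
    (fun i j => by rw [Matrix.neg_apply, abs_neg]; linarith [(sh₂ i j).2.1])
    (by linarith) (by linarith) (by simpa using hμ0) (by linarith)
    (fun i j => by rw [Matrix.neg_apply, Matrix.neg_apply, neg_sub_neg, abs_sub_comm]; linarith [(sh₂ i j).2.2])
  have c3 := hFmono th xh P (mat19 X') r₁ r₂ hr
  have c4 : F th xh r₂ P (mat19 X') - F th yh r₂ P (-mat19 Y') ≤ Θ := by
    by_cases hne : xh = yh
    · subst hne
      have := hFell th xh r₂ P (mat19 X') (-mat19 Y') (by
        have e : -mat19 Y' - mat19 X' = mat19 ((-1:ℝ) • (Y' + X')) := by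
          rw [mat19_smul (-1) (Y' + X'), mat19_add Y' X', neg_one_smul, neg_add, sub_eq_add_neg]
        rw [e]
        apply mat19_psd
        · intro a b
          simp only [_root_.add_apply, _root_.smul_apply, 
            inner_add_left, inner_add_right, inner_smul_left, inner_smul_right, symX, symY,
            RCLike.conj_to_real]
        · intro h
          have := (hq' h h).2
          rw [sub_self, norm_zero] at this
          simp only [_root_.add_apply, _root_.smul_apply, inner_add_left, inner_smul_left,
            RCLike.conj_to_real]
          linarith)
      linarith
    · refine le_trans (hθ th hth xh yh r₂ a (mat19 X') (-mat19 Y') hr₂ ha ?_) (hθΘ hne)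
      intro ξ η
      have := hq' (WithLp.toLp 2 ξ) (WithLp.toLp 2 η)
      rw [Matrix.neg_mulVec, dotProduct_neg, sub_neg_eq_add, mat19_quad, mat19_quad]
      rw [← WithLp.toLp_sub, EuclideanSpace.real_norm_sq_eq, EuclideanSpace.real_norm_sq_eq,
        EuclideanSpace.real_norm_sq_eq] at this
      exact this
  have := (abs_lt.1 c1).2
  have := (abs_lt.1 c2).1
  linarith

def dual19 (F : ℝ → V19 n → ℝ → V19 n → Matrix (Fin n) (Fin n) ℝ → ℝ) :
    ℝ → V19 n → ℝ → V19 n → Matrix (Fin n) (Fin n) ℝ → ℝ :=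
  fun t x r p X => -F t x (-r) (-p) (-X)

lemma dual19_sub {T : ℝ} {F : ℝ → V19 n → ℝ → V19 n → Matrix (Fin n) (Fin n) ℝ → ℝ}
    {u : ℝ × V19 n → ℝ}
    (hsuper : ∀ ψ : ℝ × V19 n → ℝ, ContDiff ℝ 2 ψ → ∀ t₀ ∈ Set.Ioo 0 T, ∀ x₀,
      IsLocalMinOn (fun q => u q - ψ q) (Set.Ioo 0 T ×ˢ Set.univ) (t₀, x₀) →
      0 ≤ ptDeriv ψ (t₀, x₀) -
        F t₀ x₀ (u (t₀, x₀)) (pxGrad ψ (t₀, x₀)) (pxHess ψ (t₀, x₀))) :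
    SubSol19 T (dual19 F) (fun q => -u q) := by
  intro ψ hψ t₀ ht x₀ hmax
  have h := hsuper (-ψ) hψ.neg t₀ ht x₀ (by
    filter_upwards [hmax] with q hq
    have hq' : -u q - ψ q ≤ -u (t₀, x₀) - ψ (t₀, x₀) := hq
    change u (t₀, x₀) - (-ψ (t₀, x₀)) ≤ u q - (-ψ q)
    linarith)
  have hf : fderiv ℝ (-ψ) = -fderiv ℝ ψ := by funext q; exact fderiv_neg
  have e1 : ptDeriv (-ψ) (t₀, x₀) = -ptDeriv ψ (t₀, x₀) := by
    unfold ptDeriv; rw [hf]; rfl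
  have e2 : pxGrad (-ψ) (t₀, x₀) = -pxGrad ψ (t₀, x₀) := by
    unfold pxGrad; rw [hf]; rfl
  have e3 : pxHess (-ψ) (t₀, x₀) = -pxHess ψ (t₀, x₀) := by
    unfold pxHess
    funext i j
    rw [hf]
    have : (fun q => (-fderiv ℝ ψ) q ((0 : ℝ), (EuclideanSpace.single j 1 : EuclideanSpace ℝ (Fin n)))) =
      -(fun q => fderiv ℝ ψ q ((0 : ℝ), (EuclideanSpace.single j 1 : EuclideanSpace ℝ (Fin n)))) := rfl
    rw [this, fderiv_neg]
    rfl
  rw [e1, e2, e3] at h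
  simp only [dual19, neg_neg]
  linarith

lemma max19 {E : Type*} [NormedAddCommGroup E] [InnerProductSpace ℝ E] [FiniteDimensional ℝ E]
    {D : Set E} (hD : IsClosed D) {u₁ u₂ : E → ℝ}
    (hu₁ : ContinuousOn u₁ D) (hu₂ : ContinuousOn u₂ D) {B δ a : ℝ} (hδ : 0 < δ) (ha : 0 ≤ a)
    (h₁ : ∀ z ∈ D, u₁ z ≤ B - δ * ‖z‖ ^ 2) (h₂ : ∀ z ∈ D, u₂ z ≤ B - δ * ‖z‖ ^ 2)
    (hne : D.Nonempty) :
    ∃ zh ∈ D, ∃ wh ∈ D, ∀ z ∈ D, ∀ w ∈ D, u₁ z + u₂ w - a / 2 * ‖z - w‖ ^ 2 ≤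
      u₁ zh + u₂ wh - a / 2 * ‖zh - wh‖ ^ 2 := by
  obtain ⟨z0, hz0⟩ := hne
  set f : E × E → ℝ := fun q => u₁ q.1 + u₂ q.2 - a / 2 * ‖q.1 - q.2‖ ^ 2 with hf
  set v0 := f (z0, z0) with hv0
  set Rb := ‖z0‖ + 1 + |2 * B - v0| / δ with hRb
  have hRb1 : 1 ≤ Rb := by
    have : 0 ≤ |2 * B - v0| / δ := by positivity
    linarith [norm_nonneg z0]
  have hout : ∀ z ∈ D, ∀ w ∈ D, (Rb < ‖z‖ ∨ Rb < ‖w‖) → f (z, w) ≤ v0 := by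
    intro z hz w hw hor
    have a1 := h₁ z hz
    have a2 := h₂ w hw
    have a3 : 0 ≤ a / 2 * ‖z - w‖ ^ 2 := by positivity
    have a4 : |2 * B - v0| ≤ δ * Rb := by
      have : |2 * B - v0| / δ ≤ Rb := by linarith [norm_nonneg z0]
      calc |2 * B - v0| = δ * (|2 * B - v0| / δ) := by field_simp
        _ ≤ _ := by gcongr
    have a5 : Rb ≤ ‖z‖ ^ 2 + ‖w‖ ^ 2 := by
      rcases hor with h | h
      · nlinarith [sq_nonneg ‖w‖]
      · nlinarith [sq_nonneg ‖z‖]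
    have a6 : δ * Rb ≤ δ * (‖z‖ ^ 2 + ‖w‖ ^ 2) := by gcongr
    have := le_abs_self (2 * B - v0)
    simp only [hf]
    linarith
  have hcomp : IsCompact (D ∩ Metric.closedBall 0 Rb) := (isCompact_closedBall 0 Rb).inter_left hD
  have hz0m : z0 ∈ D ∩ Metric.closedBall 0 Rb := ⟨hz0, by
    rw [mem_closedBall_zero_iff]
    have : 0 ≤ |2 * B - v0| / δ := by positivity
    linarith⟩
  obtain ⟨⟨zh, wh⟩, ⟨hz, hw⟩, hm⟩ := (hcomp.prod hcomp).exists_isMaxOn ⟨(z0, z0), hz0m, hz0m⟩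
    (f := f) (by
      apply ContinuousOn.sub
      · apply ContinuousOn.add
        · exact (hu₁.mono inter_subset_left).comp continuousOn_fst (fun q hq => hq.1)
        · exact (hu₂.mono inter_subset_left).comp continuousOn_snd (fun q hq => hq.2)
      · fun_prop)
  refine ⟨zh, hz.1, wh, hw.1, fun z hz' w hw' => ?_⟩
  change f (z, w) ≤ f (zh, wh)
  by_cases hb : ‖z‖ ≤ Rb ∧ ‖w‖ ≤ Rb
  · exact hm (show (z, w) ∈ (D ∩ Metric.closedBall 0 Rb) ×ˢ (D ∩ Metric.closedBall 0 Rb) from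
      ⟨⟨hz', by rw [mem_closedBall_zero_iff]; exact hb.1⟩, ⟨hw', by rw [mem_closedBall_zero_iff]; exact hb.2⟩⟩)
  · refine le_trans (hout z hz' w hw' ?_) (hm (show (z0, z0) ∈ _ from ⟨hz0m, hz0m⟩))
    by_contra hcon
    push Not at hcon
    exact hb hcon

noncomputable def pen19 (u : ℝ × V19 n → ℝ) (T c η σ ε : ℝ) : W19 n → ℝ :=
  fun w => u (c * w.fst, w.snd) - η * (c * w.fst) - σ * (1 / (T - c * w.fst)) - ε * ‖w.snd‖ ^ 2

def dom19 (n : ℕ) (c T' : ℝ) : Set (W19 n) := {w : W19 n | c * w.fst ∈ Icc 0 T'}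

lemma W19_cfst : Continuous (fun w : W19 n => w.fst) := (WithLp.prod_continuous_ofLp 2 ℝ (V19 n)).fst
lemma W19_csnd : Continuous (fun w : W19 n => w.snd) := (WithLp.prod_continuous_ofLp 2 ℝ (V19 n)).snd

lemma dom19_closed (c T' : ℝ) : IsClosed (dom19 n c T') :=
  isClosed_Icc.preimage (W19_cfst.const_mul c)

lemma ucomp19 {T : ℝ} {u : ℝ × V19 n → ℝ} (hucont : ContinuousOn u (Icc 0 T ×ˢ univ)) {c T' : ℝ}
    (hT' : T' < T) : ContinuousOn (fun w : W19 n => u (c * w.fst, w.snd)) (dom19 n c T') :=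
  hucont.comp ((W19_cfst.const_mul c).prodMk W19_csnd).continuousOn
    (fun w hw => ⟨⟨hw.1, hw.2.trans hT'.le⟩, mem_univ _⟩)

lemma pen19_cont {T : ℝ} {u : ℝ × V19 n → ℝ} (hucont : ContinuousOn u (Icc 0 T ×ˢ univ)) {c T' : ℝ}
    (hT' : T' < T) (η σ ε : ℝ) : ContinuousOn (pen19 u T c η σ ε) (dom19 n c T') := by
  unfold pen19
  have h1 := W19_cfst (n := n)
  have h2 := W19_csnd (n := n)
  refine ((((ucomp19 hucont hT').sub (by fun_prop)).sub ?_).sub (by fun_prop))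
  refine continuousOn_const.mul (continuousOn_const.div (by fun_prop) ?_)
  intro w hw
  have := hw.2
  have : 0 < T - c * w.fst := by linarith
  exact this.ne'

lemma W19_fst_le (z : W19 n) : |z.fst| ≤ ‖z‖ := by
  apply le_of_sq_le_sq _ (by positivity)
  rw [W19_norm, sq_abs]; nlinarith [sq_nonneg ‖z.snd‖]

lemma W19_snd_le (z : W19 n) : ‖z.snd‖ ≤ ‖z‖ := by
  apply le_of_sq_le_sq _ (by positivity)
  rw [W19_norm]; nlinarith [sq_nonneg z.fst]

set_option maxHeartbeats 1000000 in
lemma interior19 {T : ℝ} {F : ℝ → V19 n → ℝ → V19 n → Matrix (Fin n) (Fin n) ℝ → ℝ}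
    {u : ℝ × V19 n → ℝ} {C : ℝ} (hC : ∀ q, |u q| ≤ C)
    (hucont : ContinuousOn u (Icc 0 T ×ˢ univ))
    (hS : SubSol19 T F u) (hS' : SubSol19 T (dual19 F) (fun q => -u q))
    {η a μ Θ c σ ε T' : ℝ} (hη : 0 < η) (ha : 0 < a) (hμ : 0 < μ) (hΘ : 0 ≤ Θ) (hc : 0 < c)
    (hσ : 0 ≤ σ) (hε : 0 < ε) (hT' : T' < T) {zh wh : W19 n}
    (hcmp : ∀ (t t' : ℝ) (x y : V19 n) (r₁ r₂ : ℝ) (p₁ p₂ : V19 n)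
      (S₁ S₂ : V19 n →L[ℝ] V19 n) (κ ρ : ℝ), t ∈ Icc 0 T → t' ∈ Icc 0 T →
      |r₁| ≤ C → |r₂| ≤ C → r₂ ≤ r₁ → |t - c * zh.fst| < μ → |t' - c * zh.fst| < μ →
      ‖x - zh.snd‖ < μ → ‖y - wh.snd‖ < μ → ‖p₁ - a • (zh.snd - wh.snd)‖ < μ →
      ‖p₂ - a • (zh.snd - wh.snd)‖ < μ → 0 ≤ κ → κ < μ → 0 < ρ → ρ < μ →
      (∀ a b, (inner ℝ (S₁ a) b : ℝ) = inner ℝ a (S₁ b)) →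
      (∀ a b, (inner ℝ (S₂ a) b : ℝ) = inner ℝ a (S₂ b)) →
      (∀ h k : V19 n, -(3 * a) * (‖h‖ ^ 2 + ‖k‖ ^ 2) ≤ (inner ℝ (S₁ h) h + inner ℝ (S₂ k) k : ℝ) ∧
        (inner ℝ (S₁ h) h + inner ℝ (S₂ k) k : ℝ) ≤
          3 * a * ‖h - k‖ ^ 2 + ρ * (‖h‖ ^ 2 + ‖k‖ ^ 2)) →
      F t x r₁ p₁ (mat19 (S₁ + κ • ContinuousLinearMap.id ℝ (V19 n))) -
        F t' y r₂ p₂ (-(mat19 (S₂ + κ • ContinuousLinearMap.id ℝ (V19 n)))) ≤ η)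
    (hz0 : 0 < c * zh.fst) (hzT : c * zh.fst < T') (hw0 : 0 < c * wh.fst) (hwT : c * wh.fst < T')
    (hmax : ∀ z ∈ dom19 n c T', ∀ w ∈ dom19 n c T',
      pen19 u T c η σ ε z + pen19 (fun q => -u q) T c η σ ε w - a / 2 * ‖z - w‖ ^ 2 ≤
      pen19 u T c η σ ε zh + pen19 (fun q => -u q) T c η σ ε wh - a / 2 * ‖zh - wh‖ ^ 2)
    (hpos : u (c * wh.fst, wh.snd) < u (c * zh.fst, zh.snd))
    (htt : |c * zh.fst - c * wh.fst| < μ / 4) (hεμ : 2 * ε < μ / 4)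
    (hxμ : 2 * ε * ‖zh.snd‖ < μ / 4) (hyμ : 2 * ε * ‖wh.snd‖ < μ / 4) : False := by
  have hT'0 : 0 < T' := hz0.trans hzT
  have hzD : zh ∈ dom19 n c T' := ⟨hz0.le, hzT.le⟩
  have hwD : wh ∈ dom19 n c T' := ⟨hw0.le, hwT.le⟩
  have hucontm : ContinuousOn (fun q => -u q) (Icc 0 T ×ˢ univ) := hucont.neg
  have hb : ∀ v : ℝ × V19 n → ℝ, (∀ q, |v q| ≤ C) → ∀ z ∈ dom19 n c T', pen19 v T c η σ ε z ≤ C := by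
    intro v hv z hz
    have h1 := (abs_le.1 (hv (c * z.fst, z.snd))).2
    have h2 : 0 ≤ η * (c * z.fst) := mul_nonneg hη.le hz.1
    have h3 : 0 < T - c * z.fst := by linarith [hz.2]
    have h4 : 0 ≤ σ * (1 / (T - c * z.fst)) := by positivity
    have h5 : 0 ≤ ε * ‖z.snd‖ ^ 2 := by positivity
    unfold pen19; linarith
  -- continuity radius
  set g := (u (c * zh.fst, zh.snd) - u (c * wh.fst, wh.snd)) / 2 with hg
  have hgp : 0 < g := by rw [hg]; linarith
  have hcz := Metric.continuousWithinAt_iff.1 (ucomp19 hucont hT' zh hzD) g hgp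
  have hcw := Metric.continuousWithinAt_iff.1 (ucomp19 hucont hT' wh hwD) g hgp
  obtain ⟨d1, hd1, hcz⟩ := hcz
  obtain ⟨d2, hd2, hcw⟩ := hcw
  set m1 := min (min d1 d2) (min (μ / 4) 1) with hm1
  set m2 := min (min (c * zh.fst) (T' - c * zh.fst)) (min (c * wh.fst) (T' - c * wh.fst)) with hm2
  set ρ := min (min m1 (m2 / c)) (min (μ / 4 / c) (c * η / 8)) with hρ
  have hm1p : 0 < m1 := by positivity
  have hm2p : 0 < m2 := by
    have : 0 < T' - c * zh.fst := by linarith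
    have : 0 < T' - c * wh.fst := by linarith
    positivity
  have hρp : 0 < ρ := by positivity
  have hρ1 : ρ ≤ m1 := (min_le_left _ _).trans (min_le_left _ _)
  have hρ2 : c * ρ ≤ m2 := by
    have : ρ ≤ m2 / c := (min_le_left _ _).trans (min_le_right _ _)
    rw [le_div_iff₀ hc] at this; linarith
  have hρ3 : c * ρ ≤ μ / 4 := by
    have : ρ ≤ μ / 4 / c := (min_le_right _ _).trans (min_le_left _ _)
    rw [le_div_iff₀ hc] at this; linarith
  have hρ4 : ρ ≤ c * η / 8 := (min_le_right _ _).trans (min_le_right _ _)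
  have hρd1 : ρ ≤ d1 := hρ1.trans ((min_le_left _ _).trans (min_le_left _ _))
  have hρd2 : ρ ≤ d2 := hρ1.trans ((min_le_left _ _).trans (min_le_right _ _))
  have hρμ : ρ ≤ μ / 4 := hρ1.trans ((min_le_right _ _).trans (min_le_left _ _))
  have hρo : ρ ≤ 1 := hρ1.trans ((min_le_right _ _).trans (min_le_right _ _))
  obtain ⟨z, w, p, q, X, Y, hz, hw, hzz, hww, hp, hq, hj1, hj2, hXY⟩ :=
    sums19 (dom19_closed c T') (pen19_cont hucont hT' η σ ε) (pen19_cont hucontm hT' η σ ε)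
      (hb u hC) (hb _ (fun q => by rw [abs_neg]; exact hC q)) ha hzD hwD hmax ρ hρp
  obtain ⟨S₁, hs₁, hSX₁⟩ := blk19 X
  obtain ⟨S₂, hs₂, hSX₂⟩ := blk19 Y
  have f1 : |c * z.fst - c * zh.fst| < c * ρ := by
    rw [← mul_sub, abs_mul, abs_of_pos hc]
    have : |z.fst - zh.fst| ≤ ‖z - zh‖ := W19_fst_le (z - zh)
    gcongr
    linarith
  have f2 : |c * w.fst - c * wh.fst| < c * ρ := by
    rw [← mul_sub, abs_mul, abs_of_pos hc]
    have : |w.fst - wh.fst| ≤ ‖w - wh‖ := W19_fst_le (w - wh)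
    gcongr
    linarith
  have k1 : m2 ≤ c * zh.fst := (min_le_left _ _).trans (min_le_left _ _)
  have k2 : m2 ≤ T' - c * zh.fst := (min_le_left _ _).trans (min_le_right _ _)
  have k3 : m2 ≤ c * wh.fst := (min_le_right _ _).trans (min_le_left _ _)
  have k4 : m2 ≤ T' - c * wh.fst := (min_le_right _ _).trans (min_le_right _ _)
  have f1' := abs_lt.1 f1
  have f2' := abs_lt.1 f2
  have J1 := jet19 hS (ε' := μ / 4) hc hσ hT' (η := η) (ε := ε) (by linarith) (by linarith) hj1 hs₁ hSX₁ (by positivity)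
  have J2 := jet19 hS' (ε' := μ / 4) hc hσ hT' (η := η) (ε := ε) (by linarith) (by linarith) hj2 hs₂ hSX₂ (by positivity)
  simp only [dual19, neg_neg] at J2
  have g1 : ‖z.snd - zh.snd‖ < ρ := (W19_snd_le (z - zh)).trans_lt hzz
  have g2 : ‖w.snd - wh.snd‖ < ρ := (W19_snd_le (w - wh)).trans_lt hww
  have g3 : ‖p.snd - a • (zh.snd - wh.snd)‖ < ρ := (W19_snd_le (p - a • (zh - wh))).trans_lt hp
  have g4 : ‖q.snd + a • (zh.snd - wh.snd)‖ < ρ := (W19_snd_le (q + a • (zh - wh))).trans_lt hq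
  have g5 : |p.fst - a * (zh.fst - wh.fst)| < ρ := (W19_fst_le (p - a • (zh - wh))).trans_lt hp
  have g6 : |q.fst + a * (zh.fst - wh.fst)| < ρ := (W19_fst_le (q + a • (zh - wh))).trans_lt hq
  have r1 := hcz hz (by rw [dist_eq_norm]; linarith)
  have r2 := hcw hw (by rw [dist_eq_norm]; linarith)
  rw [Real.dist_eq, abs_lt] at r1 r2
  have small : ∀ x xh : V19 n, ‖x - xh‖ < ρ → 2 * ε * ‖xh‖ < μ / 4 → ‖(2 * ε) • x‖ < μ / 2 := by
    intro x xh h1 h2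
    rw [norm_smul, Real.norm_eq_abs, abs_of_pos (by positivity)]
    have : ‖x‖ ≤ ‖x - xh‖ + ‖xh‖ := by simpa using norm_add_le (x - xh) xh
    have h3 : 2 * ε * ‖x‖ ≤ 2 * ε * (1 + ‖xh‖) := by gcongr; linarith
    linarith
  have K := hcmp (c * z.fst) (c * w.fst) z.snd w.snd (u (c * z.fst, z.snd)) (u (c * w.fst, w.snd))
    (p.snd + (2 * ε) • z.snd) (-(q.snd + (2 * ε) • w.snd)) S₁ S₂ (2 * ε + μ / 4) ρ
    ⟨hz.1, hz.2.trans hT'.le⟩ ⟨hw.1, hw.2.trans hT'.le⟩ (hC _) (hC _) (by linarith [r1.1, r2.2])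
    (by linarith) (by
      have : c * w.fst - c * zh.fst = (c * w.fst - c * wh.fst) - (c * zh.fst - c * wh.fst) := by ring
      rw [this]
      refine (abs_sub _ _).trans_lt ?_
      linarith) (by linarith) (by linarith)
    (by
      have : p.snd + (2 * ε) • z.snd - a • (zh.snd - wh.snd) =
        (p.snd - a • (zh.snd - wh.snd)) + (2 * ε) • z.snd := by abel
      rw [this]
      refine (norm_add_le _ _).trans_lt ?_
      linarith [small _ _ g1 hxμ])
    (by
      have : -(q.snd + (2 * ε) • w.snd) - a • (zh.snd - wh.snd) =
        -((q.snd + a • (zh.snd - wh.snd)) + (2 * ε) • w.snd) := by abel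
      rw [this, norm_neg]
      refine (norm_add_le _ _).trans_lt ?_
      linarith [small _ _ g2 hyμ])
    (by positivity) (by linarith) hρp (by linarith) hs₁ hs₂ (by
      intro h k
      have := hXY (pt19 0 h) (pt19 0 k)
      rw [← hSX₁, ← hSX₂, W19_norm, W19_norm, W19_norm] at this
      have e : (pt19 0 h - pt19 0 k : W19 n).fst = 0 := by
        change (0:ℝ) - 0 = 0; ring
      have e' : (pt19 0 h - pt19 0 k : W19 n).snd = h - k := rfl
      rw [e, e'] at this
      simp only [pt19_fst, pt19_snd] at this
      norm_num at this ⊢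
      exact this)
  have e : η + p.fst / c + (η + q.fst / c) ≤ η := by linarith
  have e2 : -(η / 2) < p.fst / c + q.fst / c := by
    rw [← add_div, lt_div_iff₀ hc]
    have := abs_lt.1 g5
    have := abs_lt.1 g6
    nlinarith
  linarith

lemma ev19 (A : ℝ) {b : ℝ} (hb : 0 < b) : ∀ᶠ e in nhdsWithin (0:ℝ) (Ioi 0), e * A < b := by
  have h : Tendsto (fun e : ℝ => e * A) (nhds 0) (nhds (0 * A)) := by
    apply Continuous.tendsto; fun_prop
  rw [zero_mul] at h
  exact (h.mono_left nhdsWithin_le_nhds).eventually (gt_mem_nhds hb)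

set_option maxHeartbeats 1000000 in
lemma penal19 {T : ℝ} {F : ℝ → V19 n → ℝ → V19 n → Matrix (Fin n) (Fin n) ℝ → ℝ}
    {u : ℝ × V19 n → ℝ} {C : ℝ} (hC0 : 0 < C) (hC : ∀ q, |u q| ≤ C)
    (hucont : ContinuousOn u (Icc 0 T ×ˢ univ))
    (hS : SubSol19 T F u) (hS' : SubSol19 T (dual19 F) (fun q => -u q))
    {η a μ τ M ω₀ : ℝ} (hη : 0 < η) (ha : 1 ≤ a) (hμ : 0 < μ) (hτ : 0 < τ)
    (hcmp : ∀ (th : ℝ) (xh yh : V19 n), th ∈ Icc 0 T → a * ‖xh - yh‖ ^ 2 ≤ 16 * τ →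
      ∀ (t t' : ℝ) (x y : V19 n) (r₁ r₂ : ℝ) (p₁ p₂ : V19 n)
      (S₁ S₂ : V19 n →L[ℝ] V19 n) (κ ρ : ℝ), t ∈ Icc 0 T → t' ∈ Icc 0 T →
      |r₁| ≤ C → |r₂| ≤ C → r₂ ≤ r₁ → |t - th| < μ → |t' - th| < μ →
      ‖x - xh‖ < μ → ‖y - yh‖ < μ → ‖p₁ - a • (xh - yh)‖ < μ →
      ‖p₂ - a • (xh - yh)‖ < μ → 0 ≤ κ → κ < μ → 0 < ρ → ρ < μ →
      (∀ a b, (inner ℝ (S₁ a) b : ℝ) = inner ℝ a (S₁ b)) →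
      (∀ a b, (inner ℝ (S₂ a) b : ℝ) = inner ℝ a (S₂ b)) →
      (∀ h k : V19 n, -(3 * a) * (‖h‖ ^ 2 + ‖k‖ ^ 2) ≤ (inner ℝ (S₁ h) h + inner ℝ (S₂ k) k : ℝ) ∧
        (inner ℝ (S₁ h) h + inner ℝ (S₂ k) k : ℝ) ≤
          3 * a * ‖h - k‖ ^ 2 + ρ * (‖h‖ ^ 2 + ‖k‖ ^ 2)) →
      F t x r₁ p₁ (mat19 (S₁ + κ • ContinuousLinearMap.id ℝ (V19 n))) -
        F t' y r₂ p₂ (-(mat19 (S₂ + κ • ContinuousLinearMap.id ℝ (V19 n)))) ≤ η)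
    (hM : ∀ t ∈ Ico 0 T, ∀ x y : V19 n,
      u (t, x) - u (t, y) - 2 * η * t - a / 4 * ‖x - y‖ ^ 2 ≤ M + τ)
    {ts : ℝ} {xs ys : V19 n} (hts : ts ∈ Ico 0 T)
    (hstar : M - τ / 2 < u (ts, xs) - u (ts, ys) - 2 * η * ts - a / 2 * ‖xs - ys‖ ^ 2)
    (hω0 : 0 ≤ ω₀) (h0 : ∀ x y : V19 n, a * ‖x - y‖ ^ 2 ≤ 16 * τ → u (0, x) - u (0, y) ≤ ω₀)
    (hωM : ω₀ + 3 * τ < M) : False := by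
  have ha0 : 0 < a := by linarith
  have hTs : 0 < T - ts := by linarith [hts.2]
  obtain ⟨ε, ⟨⟨hε1, hε2⟩, hε3⟩, hε⟩ := (((ev19 (‖xs‖ ^ 2 + ‖ys‖ ^ 2) (b := τ / 4) (by linarith)).and
    (ev19 2 (b := μ / 4) (by linarith))).and (ev19 (8 * C) (b := (μ / 4) ^ 2) (by positivity))).and
    self_mem_nhdsWithin |>.exists
  replace hε : 0 < ε := hε
  obtain ⟨σ, hσ1, hσ⟩ := ((ev19 (2 * (1 / (T - ts))) (b := τ / 4) (by linarith)).and
    self_mem_nhdsWithin).exists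
  replace hσ : 0 < σ := hσ
  obtain ⟨T', hT', htsT', hσT⟩ : ∃ T' < T, ts < T' ∧ 2 * C + 1 ≤ σ * (1 / (T - T')) := by
    refine ⟨max ((ts + T) / 2) (T - σ / (2 * C + 1)), ?_, ?_, ?_⟩
    · apply max_lt
      · linarith
      · have : 0 < σ / (2 * C + 1) := by positivity
        linarith
    · exact lt_of_lt_of_le (by linarith) (le_max_left _ _)
    · set T' := max ((ts + T) / 2) (T - σ / (2 * C + 1)) with hTd
      have h1 : T - σ / (2 * C + 1) ≤ T' := le_max_right _ _
      have h2 : T' < T := by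
        apply max_lt
        · linarith
        · have : 0 < σ / (2 * C + 1) := by positivity
          linarith
      have h3 : 0 < T - T' := by linarith
      rw [mul_one_div, le_div_iff₀ h3]
      have h4 : T - T' ≤ σ / (2 * C + 1) := by linarith
      rw [le_div_iff₀ (by positivity)] at h4
      linarith
  -- uniform continuity
  obtain ⟨Rb, hRb0, hRb⟩ : ∃ Rb > (0:ℝ), ∀ x : V19 n, ε * ‖x‖ ^ 2 ≤ 2 * C → ‖x‖ ≤ Rb := by
    refine ⟨2 * C / ε + 1, by positivity, fun x hx => ?_⟩
    by_contra hcon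
    push Not at hcon
    have h1 : 2 * C < ε * (‖x‖ - 0) := by
      have : 2 * C / ε < ‖x‖ := by linarith
      rw [div_lt_iff₀ hε] at this
      linarith
    have h2 : 1 < ‖x‖ := by
      have : 0 < 2 * C / ε := by positivity
      linarith
    nlinarith [mul_pos hε (by linarith : 0 < ‖x‖)]
  have hKc : IsCompact (Icc 0 T ×ˢ Metric.closedBall (0 : V19 n) Rb) :=
    isCompact_Icc.prod (isCompact_closedBall _ _)
  have hUC := hKc.uniformContinuousOn_of_continuous
    (hucont.mono (prod_mono le_rfl (subset_univ _)))
  obtain ⟨d1, hd1, hUC⟩ := Metric.uniformContinuousOn_iff.1 hUC τ hτ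
  have hUC' : ∀ t ∈ Icc 0 T, ∀ s ∈ Icc 0 T, ∀ x : V19 n, ‖x‖ ≤ Rb → |t - s| < d1 →
      |u (t, x) - u (s, x)| < τ := by
    intro t ht s hs x hx hd
    have := hUC (t, x) ⟨ht, by simpa using hx⟩ (s, x) ⟨hs, by simpa using hx⟩ (by
      rw [Prod.dist_eq, dist_self, Real.dist_eq]
      exact max_lt hd hd1)
    rwa [Real.dist_eq] at this
  set d0 := min d1 (min (τ / η) (μ / 4)) with hd0
  have hd0p : 0 < d0 := by
    refine lt_min hd1 (lt_min (by positivity) (by positivity))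
  have hd01 : d0 ≤ d1 := min_le_left _ _
  have hd02 : d0 ≤ τ / η := (min_le_right _ _).trans (min_le_left _ _)
  have hd03 : d0 ≤ μ / 4 := (min_le_right _ _).trans (min_le_right _ _)
  obtain ⟨c, ⟨hc1, hc2⟩, hc⟩ := (((ev19 (4 * C / a) (b := d0 ^ 2) (by positivity)).and
    (ev19 1 (b := 1) one_pos)).and self_mem_nhdsWithin).exists
  replace hc : 0 < c := hc
  have hct : c * (ts / c) = ts := by field_simp
  have hbd : ∀ v : ℝ × V19 n → ℝ, (∀ q, |v q| ≤ C) → ∀ z ∈ dom19 n c T',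
      pen19 v T c η σ ε z ≤ (C + ε * (T' / c) ^ 2) - ε * ‖z‖ ^ 2 := by
    intro v hv z hz
    have h1 := (abs_le.1 (hv (c * z.fst, z.snd))).2
    have h2 : 0 ≤ η * (c * z.fst) := mul_nonneg hη.le hz.1
    have h3 : 0 < T - c * z.fst := by linarith [hz.2]
    have h4 : 0 ≤ σ * (1 / (T - c * z.fst)) := by positivity
    have h5 : z.fst ^ 2 ≤ (T' / c) ^ 2 := by
      have h6 : 0 ≤ z.fst := nonneg_of_mul_nonneg_right hz.1 hc
      apply pow_le_pow_left₀ h6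
      rw [le_div_iff₀ hc]; linarith [hz.2]
    have h7 : ε * z.fst ^ 2 ≤ ε * (T' / c) ^ 2 := by gcongr
    rw [W19_norm]
    unfold pen19; linarith
  have hC' : ∀ q, |(fun q => -u q) q| ≤ C := fun q => by simpa using hC q
  have hzs : pt19 (ts / c) xs ∈ dom19 n c T' := by
    change c * (ts / c) ∈ Icc 0 T'
    rw [hct]; exact ⟨hts.1, htsT'.le⟩
  have hws : pt19 (ts / c) ys ∈ dom19 n c T' := by
    change c * (ts / c) ∈ Icc 0 T'
    rw [hct]; exact ⟨hts.1, htsT'.le⟩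
  obtain ⟨zh, hz, wh, hw, hmax⟩ := max19 (dom19_closed (n := n) c T') (pen19_cont hucont hT' η σ ε)
    (pen19_cont (u := fun q => -u q) hucont.neg hT' η σ ε) hε ha0.le (hbd u hC) (hbd (fun q => -u q) hC') ⟨_, hzs⟩
  have hV := hmax _ hzs _ hws
  have hnn : ‖pt19 (ts / c) xs - pt19 (ts / c) ys‖ ^ 2 = ‖xs - ys‖ ^ 2 := by
    rw [W19_norm]
    have e1 : (pt19 (ts / c) xs - pt19 (ts / c) ys).fst = 0 := by
      change ts / c - ts / c = 0; ring
    have e2 : (pt19 (ts / c) xs - pt19 (ts / c) ys).snd = xs - ys := rfl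
    rw [e1, e2]; ring
  have hl1 : pen19 u T c η σ ε (pt19 (ts / c) xs) =
      u (ts, xs) - η * ts - σ * (1 / (T - ts)) - ε * ‖xs‖ ^ 2 := by
    unfold pen19; rw [pt19_fst, pt19_snd, hct]
  have hl2 : pen19 (fun q => -u q) T c η σ ε (pt19 (ts / c) ys) =
      -u (ts, ys) - η * ts - σ * (1 / (T - ts)) - ε * ‖ys‖ ^ 2 := by
    unfold pen19; rw [pt19_fst, pt19_snd, hct]
  have hhn : ‖zh - wh‖ ^ 2 = (zh.fst - wh.fst) ^ 2 + ‖zh.snd - wh.snd‖ ^ 2 := W19_norm _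
  have hl3 : pen19 u T c η σ ε zh = u (c * zh.fst, zh.snd) - η * (c * zh.fst)
    - σ * (1 / (T - c * zh.fst)) - ε * ‖zh.snd‖ ^ 2 := rfl
  have hl4 : pen19 (fun q => -u q) T c η σ ε wh = -u (c * wh.fst, wh.snd) - η * (c * wh.fst)
    - σ * (1 / (T - c * wh.fst)) - ε * ‖wh.snd‖ ^ 2 := rfl
  rw [hl1, hl2, hl3, hl4, hnn, hhn] at hV
  obtain ⟨ht0, htT⟩ := hz
  obtain ⟨hs0, hsT⟩ := hw
  have hcc : (c * zh.fst - c * wh.fst) ^ 2 = c ^ 2 * (zh.fst - wh.fst) ^ 2 := by ring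
  have hVM : M - τ < u (c * zh.fst, zh.snd) - u (c * wh.fst, wh.snd) - η * (c * zh.fst)
      - η * (c * wh.fst) - σ * (1 / (T - c * zh.fst)) - σ * (1 / (T - c * wh.fst))
      - ε * ‖zh.snd‖ ^ 2 - ε * ‖wh.snd‖ ^ 2
      - a / 2 * ((zh.fst - wh.fst) ^ 2 + ‖zh.snd - wh.snd‖ ^ 2) := by
    linarith
  have ufz := (abs_le.1 (hC (c * zh.fst, zh.snd)))
  have ufw := (abs_le.1 (hC (c * wh.fst, wh.snd)))
  have p1 : 0 ≤ η * (c * zh.fst) := mul_nonneg hη.le ht0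
  have p2 : 0 ≤ η * (c * wh.fst) := mul_nonneg hη.le hs0
  have q1 : 0 < T - c * zh.fst := by linarith
  have q2 : 0 < T - c * wh.fst := by linarith
  have p3 : 0 ≤ σ * (1 / (T - c * zh.fst)) := by positivity
  have p4 : 0 ≤ σ * (1 / (T - c * wh.fst)) := by positivity
  have p5 : 0 ≤ ε * ‖zh.snd‖ ^ 2 := by positivity
  have p6 : 0 ≤ ε * ‖wh.snd‖ ^ 2 := by positivity
  have p7 : 0 ≤ a / 2 * (zh.fst - wh.fst) ^ 2 := by positivity
  have p8 : 0 ≤ a / 2 * ‖zh.snd - wh.snd‖ ^ 2 := by positivity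
  have hexz : ε * ‖zh.snd‖ ^ 2 ≤ 2 * C := by linarith
  have hexw : ε * ‖wh.snd‖ ^ 2 ≤ 2 * C := by linarith
  have hzT : c * zh.fst < T' := by
    refine lt_of_le_of_ne htT (fun h => ?_)
    rw [← h] at hσT
    linarith
  have hwT : c * wh.fst < T' := by
    refine lt_of_le_of_ne hsT (fun h => ?_)
    rw [← h] at hσT
    linarith
  have hxz := hRb _ hexz
  have hxw := hRb _ hexw
  have hdd : |c * zh.fst - c * wh.fst| < d0 := by
    apply abs_lt_of_sq_lt_sq _ hd0p.le
    rw [hcc]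
    have e1 : (zh.fst - wh.fst) ^ 2 ≤ 4 * C / a := by
      rw [le_div_iff₀ ha0]; linarith
    have e2 : c ^ 2 ≤ c := by nlinarith
    calc c ^ 2 * (zh.fst - wh.fst) ^ 2 ≤ c * (4 * C / a) := by gcongr
      _ < _ := hc1
  have htm : c * zh.fst ∈ Icc 0 T := ⟨ht0, by linarith⟩
  have hsm : c * wh.fst ∈ Icc 0 T := ⟨hs0, by linarith⟩
  have huy := abs_lt.1 (hUC' _ htm _ hsm _ hxw (hdd.trans_le hd01))
  have hux := abs_lt.1 (hUC' _ htm _ hsm _ hxz (hdd.trans_le hd01))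
  have hηd : η * (c * zh.fst) - η * (c * wh.fst) ≤ τ := by
    have e1 : c * zh.fst - c * wh.fst ≤ τ / η := ((le_abs_self _).trans hdd.le).trans hd02
    rw [le_div_iff₀ hη] at e1
    linarith
  have hMt := hM (c * zh.fst) ⟨ht0, by linarith⟩ zh.snd wh.snd
  have h16 : a * ‖zh.snd - wh.snd‖ ^ 2 ≤ 16 * τ := by linarith
  have h0' := h0 _ _ h16
  have hz0 : 0 < c * zh.fst := by
    refine lt_of_le_of_ne ht0 (fun h => ?_)
    rw [← h] at hVM huy
    rw [← h] at p1 p3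
    linarith
  have hw0 : 0 < c * wh.fst := by
    refine lt_of_le_of_ne hs0 (fun h => ?_)
    rw [← h] at hVM hux
    rw [← h] at p2 p4
    linarith
  have hsm : ∀ x : V19 n, ε * ‖x‖ ^ 2 ≤ 2 * C → 2 * ε * ‖x‖ < μ / 4 := by
    intro x hx
    refine lt_of_pow_lt_pow_left₀ 2 (by positivity) ?_
    calc (2 * ε * ‖x‖) ^ 2 = 4 * ε * (ε * ‖x‖ ^ 2) := by ring
      _ ≤ 4 * ε * (2 * C) := by gcongr
      _ = ε * (8 * C) := by ring
      _ < _ := hε3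
  exact interior19 hC hucont hS hS' hη ha0 hμ (le_refl (0:ℝ)) hc hσ.le hε hT'
    (hcmp _ _ _ htm h16) hz0 hzT hw0 hwT hmax (by linarith) (hdd.trans_le hd03) (by linarith)
    (hsm _ hexz) (hsm _ hexw)

set_option maxHeartbeats 1000000 in
lemma spatial19 {T : ℝ} (hT : 0 < T)
    {F : ℝ → V19 n → ℝ → V19 n → Matrix (Fin n) (Fin n) ℝ → ℝ}
    (hFell : ∀ t x r p (X Y : Matrix (Fin n) (Fin n) ℝ), (Y - X).PosSemidef →
      F t x r p X ≤ F t x r p Y)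
    (hFmono : ∀ t x p X r s, s ≤ r → F t x r p X ≤ F t x s p X)
    (hFstruct : ∀ R > (0:ℝ), ∃ θ : ℝ → ℝ, (∀ s, 0 ≤ θ s) ∧
      Tendsto θ (nhdsWithin 0 (Set.Ioi 0)) (nhds 0) ∧
      ∀ t ∈ Set.Icc 0 T, ∀ (x xt : V19 n) (r a : ℝ)
        (X Y : Matrix (Fin n) (Fin n) ℝ), |r| ≤ R → 0 < a →
        (∀ ξ η : Fin n → ℝ,
          -(3 * a) * ((∑ i, ξ i ^ 2) + ∑ i, η i ^ 2)
              ≤ ξ ⬝ᵥ X.mulVec ξ - η ⬝ᵥ Y.mulVec η ∧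
          ξ ⬝ᵥ X.mulVec ξ - η ⬝ᵥ Y.mulVec η ≤ 3 * a * ∑ i, (ξ i - η i) ^ 2) →
        F t x r (a • (x - xt)) X - F t xt r (a • (x - xt)) Y
          ≤ θ (a * ‖x - xt‖ ^ 2 + ‖x - xt‖))
    (hFuc : ∀ R > (0:ℝ), ∀ δ > (0:ℝ), ∃ η > (0:ℝ), ∀ t t' x x' r r' p p'
      (X X' : Matrix (Fin n) (Fin n) ℝ),
      t ∈ Set.Icc 0 T → t' ∈ Set.Icc 0 T →
      |r| ≤ R → |r'| ≤ R → ‖p‖ ≤ R → ‖p'‖ ≤ R →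
      (∀ i j, |X i j| ≤ R) → (∀ i j, |X' i j| ≤ R) →
      |t - t'| < η → ‖x - x'‖ < η → |r - r'| < η → ‖p - p'‖ < η →
      (∀ i j, |X i j - X' i j| < η) →
      |F t x r p X - F t' x' r' p' X'| < δ)
    {u : ℝ × V19 n → ℝ} {C : ℝ} (hC0 : 0 < C) (hC : ∀ q, |u q| ≤ C)
    (hucont : ContinuousOn u (Icc 0 T ×ˢ univ))
    (hS : SubSol19 T F u) (hS' : SubSol19 T (dual19 F) (fun q => -u q))
    (hu0 : UniformContinuous (fun x => u (0, x))) {ω : ℝ} (hω : 0 < ω) :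
    ∃ A : ℝ, 0 ≤ A ∧ ∀ t ∈ Icc 0 T, ∀ x y : V19 n, u (t, x) - u (t, y) ≤ ω + A * ‖x - y‖ ^ 2 := by
  set η := ω / (8 * T) with hηd
  have hη : 0 < η := by positivity
  have hηT : 2 * η * T = ω / 4 := by rw [hηd]; field_simp; norm_num
  obtain ⟨θ, hθ0, hθt, hθ⟩ := hFstruct (C + 1) (by linarith)
  obtain ⟨s0, hs0, hs⟩ := Metric.tendsto_nhdsWithin_nhds.1 hθt (η / 2) (by linarith)
  obtain ⟨d, hd, hud⟩ := Metric.uniformContinuous_iff.1 hu0 (ω / 8) (by linarith)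
  obtain ⟨τ, ⟨⟨⟨⟨hτ1, hτ2⟩, hτ3⟩, hτ4⟩, hτ5⟩, hτ⟩ := ((((((ev19 16 (b := 1) one_pos).and
    (ev19 16 (b := d ^ 2) (by positivity))).and (ev19 48 hω)).and
    (ev19 16 (b := (s0 / 2) ^ 2) (by positivity))).and
    (ev19 16 (b := s0 / 2) (by positivity))).and self_mem_nhdsWithin).exists
  replace hτ : 0 < τ := hτ
  set g : ℝ → ℝ → V19 n → V19 n → ℝ := fun a t x y =>
    u (t, x) - u (t, y) - 2 * η * t - a / 2 * ‖x - y‖ ^ 2 with hg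
  set S : ℝ → Set ℝ := fun a => {v | ∃ t ∈ Ico 0 T, ∃ x y : V19 n, v = g a t x y} with hSd
  have hSne : ∀ a, (0:ℝ) ∈ S a := fun a => ⟨0, ⟨le_rfl, hT⟩, 0, 0, by simp [hg]⟩
  have hSb : ∀ a, 0 ≤ a → ∀ v ∈ S a, v ≤ 2 * C := by
    rintro a ha v ⟨t, ht, x, y, rfl⟩
    have h1 := abs_le.1 (hC (t, x))
    have h2 := abs_le.1 (hC (t, y))
    have h3 : 0 ≤ 2 * η * t := mul_nonneg (by linarith) ht.1
    have h4 : 0 ≤ a / 2 * ‖x - y‖ ^ 2 := by positivity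
    simp only [hg]; linarith
  have hbdd : ∀ a, 0 ≤ a → BddAbove (S a) := fun a ha => ⟨2 * C, hSb a ha⟩
  have hle : ∀ a, 0 ≤ a → ∀ t ∈ Ico 0 T, ∀ x y, g a t x y ≤ sSup (S a) := fun a ha t ht x y =>
    le_csSup (hbdd a ha) ⟨t, ht, x, y, rfl⟩
  obtain ⟨k, hk⟩ : ∃ k : ℕ, sSup (S (2 ^ k)) < sSup (S (2 ^ (k + 1))) + τ := by
    by_contra hcon
    push Not at hcon
    have h1 : ∀ k : ℕ, sSup (S (2 ^ k)) ≤ sSup (S 1) - k * τ := by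
      intro k
      induction k with
      | zero => simp
      | succ k ih => have := hcon k; push_cast; linarith
    have h2 : sSup (S 1) ≤ 2 * C := csSup_le ⟨0, hSne 1⟩ (hSb 1 zero_le_one)
    obtain ⟨k, hk⟩ := exists_nat_gt (2 * C / τ)
    rw [div_lt_iff₀ hτ] at hk
    have h3 := h1 k
    have h4 := le_csSup (hbdd (2 ^ k) (by positivity)) (hSne (2 ^ k))
    linarith
  set a : ℝ := 2 ^ (k + 1) with had
  have ha1 : 1 ≤ a := one_le_pow₀ one_le_two
  have ha0 : 0 < a := by linarith
  have hak : (2:ℝ) ^ k / 2 = a / 4 := by rw [had, pow_succ]; ring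
  have hdist : ∀ x y : V19 n, a * ‖x - y‖ ^ 2 ≤ 16 * τ → ‖x - y‖ ^ 2 ≤ 16 * τ := by
    intro x y h
    nlinarith [sq_nonneg ‖x - y‖]
  have hMa : sSup (S a) ≤ ω / 2 := by
    by_contra hcon
    push Not at hcon
    obtain ⟨μ, hμ, hcmp⟩ := compare19 hFell hFmono hFuc (R := C + 1) (a := a) (δ := η / 4)
      (by linarith) ha0 (by linarith) hθ
    obtain ⟨v, ⟨ts, hts, xs, ys, rfl⟩, hv⟩ := exists_lt_of_lt_csSup ⟨0, hSne a⟩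
      (by linarith : sSup (S a) - τ / 2 < sSup (S a))
    refine penal19 hC0 hC hucont hS hS' hη ha1 hμ hτ (M := sSup (S a)) (ω₀ := ω / 8)
      ?_ ?_ hts hv (by linarith) ?_ (by linarith)
    · intro th xh yh hth hxy t t' x y r₁ r₂ p₁ p₂ S₁ S₂ κ ρ ht ht' hr₁ hr₂ hr h1 h2 h3 h4 h5 h6
        hκ h7 hρ h8 hs₁ hs₂ hq
      have e1 := hdist _ _ hxy
      have e2 : ‖xh - yh‖ ≤ 1 := by
        refine le_of_sq_le_sq (by linarith) zero_le_one
      have e3 : ‖xh - yh‖ < s0 / 2 := by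
        refine lt_of_pow_lt_pow_left₀ 2 (by positivity) (by linarith)
      have := hcmp t t' th x y xh yh r₁ r₂ p₁ p₂ S₁ S₂ κ ρ (η / 2) ht ht' hth (by linarith)
        (by linarith) hr (by linarith) h1 h2 h3 h4 h5 h6 hκ h7 hρ h8 hs₁ hs₂ hq (by linarith)
        (fun hne => by
          have e4 : 0 < ‖xh - yh‖ := norm_pos_iff.2 (sub_ne_zero.2 hne)
          have e5 : 0 < a * ‖xh - yh‖ ^ 2 + ‖xh - yh‖ := by positivity
          have e6 := hs (x := a * ‖xh - yh‖ ^ 2 + ‖xh - yh‖) e5 (by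
            rw [Real.dist_eq, sub_zero, abs_of_pos e5]; linarith)
          rw [Real.dist_eq, sub_zero] at e6
          exact (le_abs_self _).trans e6.le)
      linarith
    · intro t ht x y
      have := hle (2 ^ k) (by positivity) t ht x y
      simp only [hg] at this
      rw [hak] at this
      linarith
    · intro x y h
      have e1 := hdist _ _ h
      have e2 : dist x y < d := by
        rw [dist_eq_norm]
        exact lt_of_pow_lt_pow_left₀ 2 hd.le (by linarith)
      have := hud e2
      rw [Real.dist_eq] at this
      exact (le_abs_self _).trans this.le
  refine ⟨a / 2, by positivity, ?_⟩
  intro t ht x y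
  have hcl : closure (Ico 0 T) = Icc 0 T := closure_Ico hT.ne
  have hcx : ∀ x : V19 n, ContinuousOn (fun t => u (t, x)) (Icc 0 T) := fun x =>
    hucont.comp (by fun_prop) (fun t ht => ⟨ht, mem_univ _⟩)
  refine le_on_closure (s := Ico 0 T) (f := fun t => u (t, x) - u (t, y))
    (g := fun _ => ω + a / 2 * ‖x - y‖ ^ 2) ?_ ?_ continuousOn_const (by rwa [hcl])
  · intro t ht
    have h1 := hle a ha0.le t ht x y
    simp only [hg] at h1
    have h2 : 2 * η * t ≤ 2 * η * T := by
      have := ht.2.le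
      gcongr
    linarith
  · rw [hcl]; exact (hcx x).sub (hcx y)

set_option maxHeartbeats 1000000 in
lemma time19 {T : ℝ} {F : ℝ → V19 n → ℝ → V19 n → Matrix (Fin n) (Fin n) ℝ → ℝ}
    {u : ℝ × V19 n → ℝ} {C : ℝ} (hC0 : 0 < C) (hC : ∀ q, |u q| ≤ C)
    (hucont : ContinuousOn u (Icc 0 T ×ˢ univ))
    (hS : SubSol19 T F u)
    (hFbdd : ∀ R > (0:ℝ), ∃ B : ℝ, ∀ t x r p (X : Matrix (Fin n) (Fin n) ℝ),
      t ∈ Set.Icc 0 T → |r| ≤ R → ‖p‖ ≤ R → (∀ i j, |X i j| ≤ R) →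
      |F t x r p X| ≤ B)
    {η A : ℝ} (hη : 0 < η) (hA : 0 ≤ A)
    (hsp : ∀ t ∈ Icc 0 T, ∀ x y : V19 n, u (t, x) - u (t, y) ≤ η + A * ‖x - y‖ ^ 2) :
    ∃ K : ℝ, 0 ≤ K ∧ ∀ t₀ t : ℝ, 0 ≤ t₀ → t₀ ≤ t → t ≤ T → ∀ x₀ : V19 n,
      u (t, x₀) - u (t₀, x₀) ≤ η + K * (t - t₀) := by
  set R := C + 8 * C * (A + 1) + 1 + 2 * (A + 1) with hR
  have hRp : 0 < R := by positivity
  have hRC : C ≤ R := by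
    have : 0 ≤ 8 * C * (A + 1) + 1 + 2 * (A + 1) := by positivity
    linarith
  have hRA : 2 * (A + 1) ≤ R := by
    have : 0 ≤ C + 8 * C * (A + 1) + 1 := by positivity
    linarith
  have hRp2 : 8 * C * (A + 1) + 1 ≤ R := by
    have : 0 ≤ C + 2 * (A + 1) := by positivity
    linarith
  obtain ⟨B, hB⟩ := hFbdd R hRp
  set K := |B| + 1 with hK
  have hK0 : 0 ≤ K := by positivity
  refine ⟨K, hK0, ?_⟩
  have key : ∀ t₀ t₁ : ℝ, 0 ≤ t₀ → t₀ ≤ t₁ → t₁ < T → ∀ x₀ : V19 n,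
      u (t₁, x₀) - u (t₀, x₀) ≤ η + K * (t₁ - t₀) := by
    intro t₀ t₁ ht0 h01 h1T x₀
    by_contra hcon
    push Not at hcon
    obtain ⟨σ, hσ1, hσ⟩ := ((ev19 (1 / (T - t₁))
      (b := u (t₁, x₀) - u (t₀, x₀) - (η + K * (t₁ - t₀))) (by linarith)).and
      self_mem_nhdsWithin).exists
    replace hσ : 0 < σ := hσ
    obtain ⟨T', hT', h1T', hσT⟩ : ∃ T' < T, t₁ < T' ∧ 2 * C + 1 ≤ σ * (1 / (T - T')) := by
      have h2 : max ((t₁ + T) / 2) (T - σ / (2 * C + 1)) < T := by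
        apply max_lt
        · linarith
        · have : 0 < σ / (2 * C + 1) := by positivity
          linarith
      refine ⟨max ((t₁ + T) / 2) (T - σ / (2 * C + 1)), h2,
        lt_of_lt_of_le (by linarith) (le_max_left _ _), ?_⟩
      set T' := max ((t₁ + T) / 2) (T - σ / (2 * C + 1)) with hTd
      have h1 : T - σ / (2 * C + 1) ≤ T' := le_max_right _ _
      have h3 : 0 < T - T' := by linarith
      rw [mul_one_div, le_div_iff₀ h3]
      have h4 : T - T' ≤ σ / (2 * C + 1) := by linarith
      rw [le_div_iff₀ (by positivity)] at h4
      linarith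
    set ρ := 2 * C + 1 with hρ
    have hD : IsCompact (Icc t₀ T' ×ˢ Metric.closedBall x₀ ρ) :=
      isCompact_Icc.prod (isCompact_closedBall _ _)
    set Φ : ℝ × V19 n → ℝ := fun q => u q - (A + 1) * ‖q.2 - x₀‖ ^ 2 - K * (q.1 - t₀)
      - σ * (1 / (T - q.1)) with hΦ
    have hΦc : ContinuousOn Φ (Icc t₀ T' ×ˢ Metric.closedBall x₀ ρ) := by
      have hu' : ContinuousOn u (Icc t₀ T' ×ˢ Metric.closedBall x₀ ρ) :=
        hucont.mono (prod_mono (Icc_subset_Icc ht0 hT'.le) (subset_univ _))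
      refine ((hu'.sub (by fun_prop)).sub (by fun_prop)).sub ?_
      refine continuousOn_const.mul (continuousOn_const.div (by fun_prop) ?_)
      intro q hq
      have h1 := hq.1.2
      have : 0 < T - q.1 := by linarith
      exact this.ne'
    have hmem1 : (t₁, x₀) ∈ Icc t₀ T' ×ˢ Metric.closedBall x₀ ρ :=
      ⟨⟨h01, h1T'.le⟩, Metric.mem_closedBall_self (by positivity)⟩
    obtain ⟨⟨th, xh⟩, ⟨⟨hth0, hthT⟩, hxh⟩, hmax⟩ := hD.exists_isMaxOn ⟨_, hmem1⟩ hΦc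
    have hmax' : ∀ t ∈ Icc t₀ T', ∀ x ∈ Metric.closedBall x₀ ρ, Φ (t, x) ≤ Φ (th, xh) :=
      fun t ht x hx => hmax (show (t, x) ∈ _ from ⟨ht, hx⟩)
    have hV := hmax' t₁ ⟨h01, h1T'.le⟩ x₀ (Metric.mem_closedBall_self (by positivity))
    simp only [hΦ, sub_self, norm_zero] at hV
    dsimp only at hth0 hthT hxh
    have hq1 : 0 < T - th := by linarith
    have p1 : 0 ≤ (A + 1) * ‖xh - x₀‖ ^ 2 := by positivity
    have p2 : 0 ≤ K * (th - t₀) := mul_nonneg hK0 (by linarith)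
    have p3 : 0 ≤ σ * (1 / (T - th)) := by positivity
    have u1 := abs_le.1 (hC (th, xh))
    have u2 := abs_le.1 (hC (t₀, x₀))
    have hV' : η + (A + 1) * ‖xh - x₀‖ ^ 2 + K * (th - t₀) + σ * (1 / (T - th)) <
        u (th, xh) - u (t₀, x₀) := by linarith
    have hpx : (A + 1) * ‖xh - x₀‖ ^ 2 ≤ 2 * C := by linarith
    have hxρ : ‖xh - x₀‖ < ρ := by
      by_contra hc
      push Not at hc
      have e1 : 1 ≤ ‖xh - x₀‖ := by linarith
      have e2 : ‖xh - x₀‖ ≤ ‖xh - x₀‖ ^ 2 := by nlinarith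
      have e3 : 0 ≤ A * ‖xh - x₀‖ ^ 2 := by positivity
      linarith
    have hthT' : th < T' := by
      refine lt_of_le_of_ne hthT (fun h => ?_)
      rw [← h] at hσT
      linarith
    have hth0' : t₀ < th := by
      refine lt_of_le_of_ne hth0 (fun h => ?_)
      rw [← h] at hV' p3
      have := hsp t₀ ⟨ht0, by linarith⟩ xh x₀
      have e3 : 0 ≤ ‖xh - x₀‖ ^ 2 := by positivity
      linarith
    have hTT : 0 < T - T' := by linarith
    have hloc := subsol19_poly hS (th := th) (xh := xh) ⟨by linarith, by linarith⟩
      (τ := K + σ * (1 / (T - th) ^ 2)) (c := σ * (1 / (T - T') ^ 3))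
      (p := (2 * (A + 1)) • (xh - x₀))
      (X := (2 * (A + 1)) • ContinuousLinearMap.id ℝ (V19 n))
      (fun a b => by simp [inner_smul_left, inner_smul_right])
      (r := min (th - t₀) (min (T' - th) (ρ - ‖xh - x₀‖)))
      (lt_min (by linarith) (lt_min (by linarith) (by linarith)))
      (by
        intro t x ht hr1 hr2
        have a1 := (lt_min_iff.1 hr1).1
        have a2 := (lt_min_iff.1 (lt_min_iff.1 hr1).2).1
        have a3 := (lt_min_iff.1 (lt_min_iff.1 hr2).2).2
        have b1 := abs_lt.1 a1
        have b2 := abs_lt.1 a2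
        have b3 : ‖x - x₀‖ ≤ ρ := by
          have : x - x₀ = (x - xh) + (xh - x₀) := by abel
          rw [this]
          exact (norm_add_le _ _).trans (by linarith)
        have h1 := hmax' t ⟨by linarith, by linarith⟩ x (by
          rw [Metric.mem_closedBall, dist_eq_norm]; exact b3)
        simp only [hΦ] at h1
        have h2 : ‖x - x₀‖ ^ 2 = ‖xh - x₀‖ ^ 2 + 2 * inner ℝ (xh - x₀) (x - xh) + ‖x - xh‖ ^ 2 := by
          have : x - x₀ = (xh - x₀) + (x - xh) := by abel
          rw [this, norm_add_sq_real]
        have h3 := inv19 hT' hthT' (d := t - th) (by linarith)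
        have h4 : σ * (1 / (T - t)) ≤ σ * (1 / (T - th)) + σ * (1 / (T - th) ^ 2) * (t - th)
            + σ * (1 / (T - T') ^ 3) * (t - th) ^ 2 := by
          have e : th + (t - th) = t := by ring
          rw [e] at h3
          calc σ * (1 / (T - t)) ≤ σ * (1 / (T - th) + (t - th) / (T - th) ^ 2
              + (t - th) ^ 2 * (1 / (T - T') ^ 3)) := by gcongr
            _ = _ := by ring
        have h5 : (inner ℝ ((2 * (A + 1)) • (xh - x₀)) (x - xh) : ℝ) =
            2 * (A + 1) * inner ℝ (xh - x₀) (x - xh) := by rw [real_inner_smul_left]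
        have h6 : (inner ℝ (((2 * (A + 1)) • ContinuousLinearMap.id ℝ (V19 n)) (x - xh)) (x - xh) : ℝ) =
            2 * (A + 1) * ‖x - xh‖ ^ 2 := by
          rw [_root_.ContinuousLinearMap.smul_apply, ContinuousLinearMap.id_apply,
            real_inner_smul_left, real_inner_self_eq_norm_sq]
        rw [h5, h6]
        rw [h2] at h1
        linarith)
    have hpR : ‖(2 * (A + 1)) • (xh - x₀)‖ ≤ R := by
      refine le_trans ?_ hRp2
      rw [norm_smul, Real.norm_of_nonneg (by positivity)]
      have e1 : (2 * (A + 1) * ‖xh - x₀‖) ^ 2 ≤ 8 * C * (A + 1) := by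
        calc (2 * (A + 1) * ‖xh - x₀‖) ^ 2 = 4 * (A + 1) * ((A + 1) * ‖xh - x₀‖ ^ 2) := by ring
          _ ≤ 4 * (A + 1) * (2 * C) := by gcongr
          _ = _ := by ring
      nlinarith [sq_nonneg (2 * (A + 1) * ‖xh - x₀‖ - 1)]
    have hFB := hB th xh (u (th, xh)) _ (mat19 ((2 * (A + 1)) • ContinuousLinearMap.id ℝ (V19 n)))
      ⟨by linarith, by linarith⟩ ((hC _).trans hRC) hpR (by
        intro i j
        rw [mat19_smul, Matrix.smul_apply, mat19_id]
        split_ifs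
        · simp only [smul_eq_mul, mul_one]
          rw [abs_of_nonneg (by positivity)]; exact hRA
        · simpa using hRp.le)
    have e1 := (abs_le.1 hFB).2
    have e2 : 0 ≤ σ * (1 / (T - th) ^ 2) := by positivity
    have e3 := le_abs_self B
    linarith
  intro t₀ t ht0 h0t htT x₀
  rcases eq_or_lt_of_le h0t with h | h
  · rw [← h]; simp; exact hη.le
  have hlt : t₀ < T := h.trans_le htT
  have hcl : closure (Ico t₀ T) = Icc t₀ T := closure_Ico hlt.ne
  have hcx : ContinuousOn (fun t => u (t, x₀)) (Icc t₀ T) :=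
    hucont.comp (by fun_prop) (fun t ht => ⟨⟨ht0.trans ht.1, ht.2⟩, mem_univ _⟩)
  refine le_on_closure (s := Ico t₀ T) (f := fun t => u (t, x₀) - u (t₀, x₀))
    (g := fun t => η + K * (t - t₀)) ?_ ?_ (by fun_prop) (x := t) (by rw [hcl]; exact ⟨h0t, htT⟩)
  · intro t ht
    exact key t₀ t ht0 ht.1 ht.2 x₀
  · rw [hcl]; exact hcx.sub continuousOn_const

/-- if `u ∈ BC([0,T]×ℝⁿ)` is a viscosity solution of `∂ₜu - F = 0` on
`(0,T)×ℝⁿ` with `u(0,·) ∈ BUC(ℝⁿ)`, where `F` satisfies the structural conditions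
(properness `γ ≥ 0`, condition (3.14), degenerate ellipticity) and is bounded and
uniformly continuous on sets where `(u,p,X)` remain bounded, then
`u ∈ BUC([0,T]×ℝⁿ)`; moreover for each `η > 0` there are constants `C(η), K(η)`,
independent of `(t₀,x₀)`, with `|u(t,x₀) - u(t₀,x₀)| ≤ η + K(η)(t-t₀)` for all
`0 ≤ t₀ ≤ t ≤ T` and all `x₀`. -/
theorem stmt19 (T : ℝ) (hT : 0 < T)
    (F : ℝ → EuclideanSpace ℝ (Fin n) → ℝ → EuclideanSpace ℝ (Fin n) →
      Matrix (Fin n) (Fin n) ℝ → ℝ)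
    (hFcont : Continuous (fun q : ℝ × EuclideanSpace ℝ (Fin n) × ℝ ×
      EuclideanSpace ℝ (Fin n) × Matrix (Fin n) (Fin n) ℝ =>
        F q.1 q.2.1 q.2.2.1 q.2.2.2.1 q.2.2.2.2))
    (hFell : ∀ t x r p (X Y : Matrix (Fin n) (Fin n) ℝ), (Y - X).PosSemidef →
      F t x r p X ≤ F t x r p Y)
    (γ : ℝ) (hγ : 0 ≤ γ)
    (hFproper : ∀ t x p X r s, s ≤ r → γ * (r - s) ≤ F t x s p X - F t x r p X)
    -- structural condition (3.14) of the User's Guide, with modulus `θ_R`: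
    (hFstruct : ∀ R > (0:ℝ), ∃ θ : ℝ → ℝ, (∀ s, 0 ≤ θ s) ∧
      Tendsto θ (nhdsWithin 0 (Set.Ioi 0)) (nhds 0) ∧
      ∀ t ∈ Set.Icc 0 T, ∀ (x xt : EuclideanSpace ℝ (Fin n)) (r a : ℝ)
        (X Y : Matrix (Fin n) (Fin n) ℝ), |r| ≤ R → 0 < a →
        (∀ ξ η : Fin n → ℝ,
          -(3 * a) * ((∑ i, ξ i ^ 2) + ∑ i, η i ^ 2)
              ≤ ξ ⬝ᵥ X.mulVec ξ - η ⬝ᵥ Y.mulVec η ∧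
          ξ ⬝ᵥ X.mulVec ξ - η ⬝ᵥ Y.mulVec η ≤ 3 * a * ∑ i, (ξ i - η i) ^ 2) →
        F t x r (a • (x - xt)) X - F t xt r (a • (x - xt)) Y
          ≤ θ (a * ‖x - xt‖ ^ 2 + ‖x - xt‖))
    -- `F` bounded on sets where `(u,p,X)` remain bounded:
    (hFbdd : ∀ R > (0:ℝ), ∃ B : ℝ, ∀ t x r p (X : Matrix (Fin n) (Fin n) ℝ),
      t ∈ Set.Icc 0 T → |r| ≤ R → ‖p‖ ≤ R → (∀ i j, |X i j| ≤ R) →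
      |F t x r p X| ≤ B)
    -- `F` uniformly continuous on sets where `(u,p,X)` remain bounded:
    (hFuc : ∀ R > (0:ℝ), ∀ δ > (0:ℝ), ∃ η > (0:ℝ), ∀ t t' x x' r r' p p'
      (X X' : Matrix (Fin n) (Fin n) ℝ),
      t ∈ Set.Icc 0 T → t' ∈ Set.Icc 0 T →
      |r| ≤ R → |r'| ≤ R → ‖p‖ ≤ R → ‖p'‖ ≤ R →
      (∀ i j, |X i j| ≤ R) → (∀ i j, |X' i j| ≤ R) →
      |t - t'| < η → ‖x - x'‖ < η → |r - r'| < η → ‖p - p'‖ < η →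
      (∀ i j, |X i j - X' i j| < η) →
      |F t x r p X - F t' x' r' p' X'| < δ)
    (u : ℝ × EuclideanSpace ℝ (Fin n) → ℝ)
    (hub : ∃ C, ∀ p, |u p| ≤ C)
    (hucont : ContinuousOn u (Set.Icc 0 T ×ˢ Set.univ))
    -- `u` is a viscosity subsolution on `(0,T)×ℝⁿ`:
    (hsub : ∀ ψ : ℝ × EuclideanSpace ℝ (Fin n) → ℝ, ContDiff ℝ 2 ψ →
      ∀ t₀ ∈ Set.Ioo 0 T, ∀ x₀,
      IsLocalMaxOn (fun q => u q - ψ q) (Set.Ioo 0 T ×ˢ Set.univ) (t₀, x₀) →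
      ptDeriv ψ (t₀, x₀) - F t₀ x₀ (u (t₀, x₀)) (pxGrad ψ (t₀, x₀)) (pxHess ψ (t₀, x₀)) ≤ 0)
    -- `u` is a viscosity supersolution on `(0,T)×ℝⁿ`:
    (hsuper : ∀ ψ : ℝ × EuclideanSpace ℝ (Fin n) → ℝ, ContDiff ℝ 2 ψ →
      ∀ t₀ ∈ Set.Ioo 0 T, ∀ x₀,
      IsLocalMinOn (fun q => u q - ψ q) (Set.Ioo 0 T ×ˢ Set.univ) (t₀, x₀) →
      0 ≤ ptDeriv ψ (t₀, x₀) -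
        F t₀ x₀ (u (t₀, x₀)) (pxGrad ψ (t₀, x₀)) (pxHess ψ (t₀, x₀)))
    (hu0 : UniformContinuous (fun x => u (0, x))) :
    (∀ ε > (0:ℝ), ∃ δ > (0:ℝ), ∀ t ∈ Set.Icc 0 T, ∀ t' ∈ Set.Icc 0 T,
      ∀ x x' : EuclideanSpace ℝ (Fin n), |t - t'| < δ → ‖x - x'‖ < δ →
      |u (t, x) - u (t', x')| < ε) ∧
    (∀ η > (0:ℝ), ∃ K : ℝ, ∀ t₀ t : ℝ, 0 ≤ t₀ → t₀ ≤ t → t ≤ T →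
      ∀ x₀ : EuclideanSpace ℝ (Fin n),
      |u (t, x₀) - u (t₀, x₀)| ≤ η + K * (t - t₀)) := by
  obtain ⟨C', hC'⟩ := hub
  have hC0 : 0 < |C'| + 1 := by positivity
  have hC : ∀ q, |u q| ≤ |C'| + 1 := fun q => by
    have := hC' q
    have := le_abs_self C'
    linarith
  have hS : SubSol19 T F u := hsub
  have hS' : SubSol19 T (dual19 F) (fun q => -u q) := dual19_sub hsuper
  have hFmono : ∀ t x p X r s, s ≤ r → F t x r p X ≤ F t x s p X := by
    intro t x p X r s h
    have h1 := hFproper t x p X r s h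
    have h2 : 0 ≤ γ * (r - s) := mul_nonneg hγ (by linarith)
    linarith
  have hsp : ∀ ω > (0:ℝ), ∃ A : ℝ, 0 ≤ A ∧ ∀ t ∈ Icc 0 T, ∀ x y : EuclideanSpace ℝ (Fin n),
      u (t, x) - u (t, y) ≤ ω + A * ‖x - y‖ ^ 2 := fun ω hω =>
    spatial19 hT hFell hFmono hFstruct hFuc hC0 hC hucont hS hS' hu0 hω
  have htime : ∀ η > (0:ℝ), ∃ K : ℝ, 0 ≤ K ∧ ∀ t₀ t : ℝ, 0 ≤ t₀ → t₀ ≤ t → t ≤ T →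
      ∀ x₀ : EuclideanSpace ℝ (Fin n), |u (t, x₀) - u (t₀, x₀)| ≤ η + K * (t - t₀) := by
    intro η hη
    obtain ⟨A, hA, hA'⟩ := hsp η hη
    obtain ⟨K₁, hK₁, h₁⟩ := time19 hC0 hC hucont hS hFbdd hη hA hA'
    obtain ⟨K₂, hK₂, h₂⟩ := time19 (u := fun q => -u q) (F := dual19 F) hC0
      (fun q => by rw [abs_neg]; exact hC q) hucont.neg hS'
      (fun R hR => by
        obtain ⟨B, hB⟩ := hFbdd R hR
        refine ⟨B, fun t x r p X ht hr hp hX => ?_⟩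
        unfold dual19
        rw [abs_neg]
        exact hB t x _ _ _ ht (by rwa [abs_neg]) (by rwa [norm_neg])
          (fun i j => by rw [Matrix.neg_apply, abs_neg]; exact hX i j)) hη hA
      (fun t ht x y => by
        have := hA' t ht y x
        rw [norm_sub_rev] at this
        linarith)
    refine ⟨K₁ + K₂, by linarith, fun t₀ t h0 h01 hT1 x₀ => ?_⟩
    have a1 := h₁ t₀ t h0 h01 hT1 x₀
    have a2 := h₂ t₀ t h0 h01 hT1 x₀
    have b1 : 0 ≤ K₁ * (t - t₀) := mul_nonneg hK₁ (by linarith)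
    have b2 : 0 ≤ K₂ * (t - t₀) := mul_nonneg hK₂ (by linarith)
    rw [abs_le]
    constructor <;> linarith
  refine ⟨?_, fun η hη => ?_⟩
  · intro ε hε
    obtain ⟨A, hA, hA'⟩ := hsp (ε / 4) (by linarith)
    obtain ⟨K, hK, hK'⟩ := htime (ε / 4) (by linarith)
    obtain ⟨δ, ⟨⟨hδ1, hδ2⟩, hδ3⟩, hδ⟩ := ((((ev19 A (b := ε / 8) (by linarith)).and
      (ev19 K (b := ε / 8) (by linarith))).and (ev19 1 one_pos)).and self_mem_nhdsWithin).exists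
    replace hδ : 0 < δ := hδ
    refine ⟨δ, hδ, ?_⟩
    intro t ht t' ht' x x' htt hxx
    have e1 : ‖x - x'‖ ^ 2 ≤ δ := by nlinarith [norm_nonneg (x - x')]
    have e2 : A * ‖x - x'‖ ^ 2 ≤ δ * A := by
      rw [mul_comm δ]; gcongr
    have e3 : |u (t, x) - u (t, x')| ≤ ε / 4 + A * ‖x - x'‖ ^ 2 := by
      have a1 := hA' t ht x x'
      have a2 := hA' t ht x' x
      rw [norm_sub_rev] at a2
      rw [abs_le]; constructor <;> linarith
    have e4 : |u (t, x') - u (t', x')| ≤ ε / 4 + K * |t - t'| := by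
      rcases le_total t' t with h | h
      · have := hK' t' t ht'.1 h ht.2 x'
        rwa [abs_of_nonneg (sub_nonneg.2 h)]
      · have := hK' t t' ht.1 h ht'.2 x'
        rw [abs_sub_comm, abs_sub_comm t t', abs_of_nonneg (sub_nonneg.2 h)]
        exact this
    have e5 : K * |t - t'| ≤ δ * K := by
      rw [mul_comm δ]; gcongr
    have e6 := abs_sub_le (u (t, x)) (u (t, x')) (u (t', x'))
    linarith
  · obtain ⟨K, _, hK⟩ := htime η hη
    exact ⟨K, hK⟩
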